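/- arXiv:math/0511488 — 2 statements merged into one kernel-verified Lean document; each statement's English description precedes it below -/
import Mathlib

section
/- For every polytope P of dimension d ≥ 2: g_2(P) + f_1(P) − f_0(P) ≥ (d+1)(d−2)/2, where f_0(P) and f_1(P) are the numbers of vertices and edges of P and g_2(P) is the toric g-number. -/
open Classical Polynomial

section PolytopeDefs

variable {V : Type*} [AddCommGroup V] [Module ℝ V]

/-- A polytope: the convex hull of finitely many points. -/
def IsPolytope (P : Set V) : Prop := ∃ S : Finset V, P = convexHull ℝ (S : Set V)

/-- Faces of a polytope (or of a cone): the set itself, the empty face, and the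
sets of maximizers of linear functionals (equivalently, intersections with
supporting hyperplanes). -/
def IsFace (P F : Set V) : Prop :=
  F = P ∨ F = ∅ ∨ ∃ l : V →ₗ[ℝ] ℝ, F = {x | x ∈ P ∧ ∀ y ∈ P, l y ≤ l x}

/-- Dimension of a polytope: the dimension of its affine span, with the
convention `pdim ∅ = -1`. -/
noncomputable def pdim (P : Set V) : ℤ :=
  if P = ∅ then -1 else (Module.finrank ℝ (affineSpan ℝ P).direction : ℤ)

/-- The `g`-truncation: from the toric `h`-polynomial of a `d`-dimensional
polytope to its toric `g`-polynomial, via `g_k = h_k - h_{k-1}` for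
`0 ≤ k ≤ d/2`, with `h_{-1} = 0`. -/
noncomputable def truncG (d : ℤ) (h : Polynomial ℚ) : Polynomial ℚ :=
  ∑ k ∈ Finset.range (d.toNat / 2 + 1),
    Polynomial.C (h.coeff k - if k = 0 then 0 else h.coeff (k - 1)) * Polynomial.X ^ k

/-- Fuelled recursion computing the toric `h`-polynomial of the interval `[F,G]`
of a face lattice (with `F` playing the role of the empty face):
`h([F,G],t) = ∑_{F ≤ G' < G} g([F,G'],t) · (t-1)^{dim G - dim G' - 1}`. -/
noncomputable def relHAux : ℕ → Set V → Set V → Polynomial ℚ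
  | 0, _, _ => 1
  | n + 1, F, G =>
      if G = F then 1
      else ∑ᶠ G' ∈ {G' : Set V | IsFace G G' ∧ F ⊆ G' ∧ G' ≠ G},
        truncG (pdim G' - pdim F - 1) (relHAux n F G') *
          (Polynomial.X - 1) ^ (pdim G - pdim G' - 1).toNat

/-- The toric `h`-polynomial of the interval `[F,G]` in a face lattice. -/
noncomputable def relH (F G : Set V) : Polynomial ℚ := relHAux (pdim G + 1).toNat F G

/-- The toric `g`-polynomial of the interval `[F,G]` in a face lattice;
`relG F P` is the polynomial `g(P/F, t)`. -/
noncomputable def relG (F G : Set V) : Polynomial ℚ :=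
  truncG (pdim G - pdim F - 1) (relH F G)

/-- The toric `h`-polynomial `h(P,t)` of a polytope `P`. -/
noncomputable def toricH (P : Set V) : Polynomial ℚ := relH ∅ P

/-- The toric `g`-polynomial `g(P,t)` of a polytope `P`. -/
noncomputable def toricG (P : Set V) : Polynomial ℚ := relG ∅ P

end PolytopeDefs


section Config

variable {ι W : Type*} [AddCommGroup W] [Module ℝ W] (p : ι → W)

noncomputable def crk (A : Finset ι) : ℕ :=
  Module.finrank ℝ (Submodule.span ℝ (p '' (A : Set ι)))

def Fc (T A : Finset ι) : Prop :=
  ∃ l : W →ₗ[ℝ] ℝ, (∀ t ∈ T, 0 ≤ l (p t)) ∧ ∀ t, t ∈ A ↔ t ∈ T ∧ l (p t) = 0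

noncomputable def cfaces (T : Finset ι) : Finset (Finset ι) := T.powerset.filter (Fc p T)

variable {p}

theorem Fc.subset {T A : Finset ι} (h : Fc p T A) : A ⊆ T := by
  obtain ⟨l, _, h⟩ := h
  exact fun t ht => ((h t).1 ht).1

theorem mem_cfaces {T A : Finset ι} : A ∈ cfaces p T ↔ Fc p T A := by
  simp only [cfaces, Finset.mem_filter, Finset.mem_powerset, and_iff_right_iff_imp]
  exact Fc.subset

theorem Fc.refl (T : Finset ι) : Fc p T T := ⟨0, by simp, by simp⟩

theorem Fc.restrict {T A B : Finset ι} (hB : Fc p T B) (hA : A ⊆ T) (hBA : B ⊆ A) :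
    Fc p A B := by
  obtain ⟨l, h1, h2⟩ := hB
  refine ⟨l, fun t ht => h1 t (hA ht), fun t => ⟨fun ht => ⟨hBA ht, ((h2 t).1 ht).2⟩, ?_⟩⟩
  rintro ⟨ht, h0⟩
  exact (h2 t).2 ⟨hA ht, h0⟩

theorem Fc.inter {T A B : Finset ι} (hA : Fc p T A) (hB : Fc p T B) : Fc p T (A ∩ B) := by
  obtain ⟨l, h1, h2⟩ := hA
  obtain ⟨m, h3, h4⟩ := hB
  refine ⟨l + m, fun t ht => add_nonneg (h1 t ht) (h3 t ht), fun t => ?_⟩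
  rw [Finset.mem_inter, h2, h4]
  constructor
  · rintro ⟨⟨a, b⟩, _, c⟩
    exact ⟨a, by simp [b, c]⟩
  · rintro ⟨a, b⟩
    have := h1 t a
    have := h3 t a
    simp only [LinearMap.add_apply] at b
    exact ⟨⟨a, by linarith⟩, a, by linarith⟩

theorem Fc.trans {T A B : Finset ι} (hA : Fc p T A) (hB : Fc p A B) : Fc p T B := by
  have hAT := hA.subset
  obtain ⟨l, h1, h2⟩ := hA
  obtain ⟨m, h3, h4⟩ := hB
  -- find N with N * l + m > 0 on T \ A
  have key : ∃ N : ℝ, ∀ t ∈ T, t ∉ A → 0 < N * l (p t) + m (p t) := by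
    have : ∀ U : Finset ι, U ⊆ T → ∃ N : ℝ, ∀ t ∈ U, t ∉ A → 0 < N * l (p t) + m (p t) := by
      intro U
      induction U using Finset.induction_on with
      | empty => intro _; exact ⟨0, by simp⟩
      | insert x U hx ih =>
        intro hU
        obtain ⟨N, hN⟩ := ih (fun y hy => hU (Finset.mem_insert_of_mem hy))
        by_cases hxA : x ∈ A
        · refine ⟨N, fun t ht htA => ?_⟩
          rcases Finset.mem_insert.1 ht with rfl | ht
          · exact absurd hxA htA
          · exact hN t ht htA
        · have hxT : x ∈ T := hU (Finset.mem_insert_self _ _)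
          have hpos : 0 < l (p x) := lt_of_le_of_ne (h1 x hxT)
            (fun h => hxA ((h2 x).2 ⟨hxT, h.symm⟩))
          refine ⟨max N ((1 - m (p x)) / l (p x)), fun t ht htA => ?_⟩
          rcases Finset.mem_insert.1 ht with rfl | ht
          · have h5 : (1 - m (p t)) / l (p t) * l (p t) = 1 - m (p t) := by field_simp
            have h6 := mul_le_mul_of_nonneg_right
              (le_max_right N ((1 - m (p t)) / l (p t))) hpos.le
            linarith
          · have h7 := hN t ht htA
            have h6 := mul_le_mul_of_nonneg_right
              (le_max_left N ((1 - m (p x)) / l (p x)))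
              (h1 t (hU (Finset.mem_insert_of_mem ht)))
            linarith
    exact this T subset_rfl
  obtain ⟨N, hN⟩ := key
  refine ⟨N • l + m, fun t ht => ?_, fun t => ?_⟩
  · simp only [LinearMap.add_apply, LinearMap.smul_apply, smul_eq_mul]
    by_cases htA : t ∈ A
    · rw [((h2 t).1 htA).2]; simpa using h3 t htA
    · exact (hN t ht htA).le
  · simp only [LinearMap.add_apply, LinearMap.smul_apply, smul_eq_mul]
    rw [h4]
    constructor
    · rintro ⟨a, b⟩
      exact ⟨hAT a, by rw [((h2 t).1 a).2, b]; simp⟩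
    · rintro ⟨a, b⟩
      by_cases htA : t ∈ A
      · refine ⟨htA, ?_⟩
        rw [((h2 t).1 htA).2] at b; simpa using b
      · exact absurd b (hN t a htA).ne'

theorem span_vanish {A : Finset ι} {l : W →ₗ[ℝ] ℝ} (h : ∀ t ∈ A, l (p t) = 0) {x : W}
    (hx : x ∈ Submodule.span ℝ (p '' (A : Set ι))) : l x = 0 := by
  have : Submodule.span ℝ (p '' (A : Set ι)) ≤ LinearMap.ker l := by
    rw [Submodule.span_le]
    rintro _ ⟨t, ht, rfl⟩
    exact h t ht
  exact this hx

theorem Fc.mem_of_span {T A : Finset ι} (h : Fc p T A) {t : ι} (ht : t ∈ T)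
    (hs : p t ∈ Submodule.span ℝ (p '' (A : Set ι))) : t ∈ A := by
  obtain ⟨l, h1, h2⟩ := h
  exact (h2 t).2 ⟨ht, span_vanish (fun t ht => ((h2 t).1 ht).2) hs⟩

instance fin_span (A : Finset ι) :
    Module.Finite ℝ (Submodule.span ℝ (p '' (A : Set ι))) :=
  FiniteDimensional.span_of_finite ℝ (A.finite_toSet.image p)

theorem crk_mono {A B : Finset ι} (h : A ⊆ B) : crk p A ≤ crk p B :=
  Submodule.finrank_mono (Submodule.span_mono (Set.image_mono (by exact_mod_cast h)))

theorem Fc.crk_lt {T A B : Finset ι} (h : Fc p T A) (hB : B ⊆ T) (hAB : A ⊂ B) :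
    crk p A < crk p B := by
  obtain ⟨x, hx, hxA⟩ := Finset.exists_of_ssubset hAB
  apply Submodule.finrank_lt_finrank_of_lt
  refine lt_of_le_of_ne
    (Submodule.span_mono (Set.image_mono (by exact_mod_cast hAB.subset))) (fun he => hxA ?_)
  apply h.mem_of_span (hB hx)
  rw [he]
  exact Submodule.subset_span ⟨x, hx, rfl⟩

theorem Fc.eq_of_crk {T A B : Finset ι} (h : Fc p T A) (hB : B ⊆ T) (hAB : A ⊆ B)
    (hr : crk p B ≤ crk p A) : A = B := by
  by_contra hne
  have := h.crk_lt hB (Finset.ssubset_iff_subset_ne.2 ⟨hAB, hne⟩)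
  omega

theorem crk_empty : crk p ∅ = 0 := by simp [crk]

theorem exists_functional (U : Submodule ℝ W) {x : W} (hx : x ∉ U) :
    ∃ l : W →ₗ[ℝ] ℝ, (∀ y ∈ U, l y = 0) ∧ l x ≠ 0 := by
  obtain ⟨f, hf, h⟩ := Submodule.exists_le_ker_of_notMem hx
  exact ⟨f, fun y hy => h hy, hf⟩

/-- minimal ratio face -/
theorem min_ratio {T A : Finset ι} {a : W →ₗ[ℝ] ℝ} (ha : ∀ t ∈ T, 0 ≤ a (p t))
    (ha' : ∀ t, t ∈ A ↔ t ∈ T ∧ a (p t) = 0) (hne : A ≠ T) (l : W →ₗ[ℝ] ℝ)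
    (hl : ∀ t ∈ A, l (p t) = 0) :
    ∃ (c : ℝ) (M : Finset ι), Fc p T M ∧ A ⊂ M ∧ (∀ t ∈ M, l (p t) = c * a (p t)) ∧
      ∀ t ∈ T, t ∉ M → c * a (p t) < l (p t) := by
  have hAT : A ⊆ T := fun t ht => ((ha' t).1 ht).1
  have hpos : ∀ t ∈ T, t ∉ A → 0 < a (p t) := fun t ht htA =>
    lt_of_le_of_ne (ha t ht) (fun h => htA ((ha' t).2 ⟨ht, h.symm⟩))
  have hn : (T \ A).Nonempty := by
    rw [Finset.sdiff_nonempty]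
    exact fun h => hne (Finset.Subset.antisymm hAT h)
  obtain ⟨x, hx, hmin⟩ := Finset.exists_min_image (T \ A) (fun t => l (p t) / a (p t)) hn
  rw [Finset.mem_sdiff] at hx
  set c := l (p x) / a (p x) with hc
  have hge : ∀ t ∈ T, c * a (p t) ≤ l (p t) := by
    intro t ht
    by_cases htA : t ∈ A
    · rw [hl t htA, ((ha' t).1 htA).2]; simp
    · have := hmin t (Finset.mem_sdiff.2 ⟨ht, htA⟩)
      exact (le_div_iff₀ (hpos t ht htA)).1 this
  have hxc : l (p x) = c * a (p x) := by
    have := hpos x hx.1 hx.2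
    rw [hc]; field_simp
  refine ⟨c, T.filter (fun t => l (p t) = c * a (p t)), ⟨l - c • a, ?_, ?_⟩, ?_, ?_, ?_⟩
  · intro t ht
    have := hge t ht
    simpa using this
  · intro t
    simp [sub_eq_zero]
  · rw [Finset.ssubset_iff_of_subset]
    · exact ⟨x, by simp [hx.1, hxc], hx.2⟩
    · intro t ht
      simp [hAT ht, hl t ht, ((ha' t).1 ht).2]
  · intro t ht
    exact (Finset.mem_filter.1 ht).2
  · intro t ht htM
    refine lt_of_le_of_ne (hge t ht) (fun h => htM ?_)
    simp [ht, h]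

/-- if the rank gap is at least two there is a nonproportional functional. -/
theorem exists_nonprop {T A : Finset ι} {a : W →ₗ[ℝ] ℝ} 
    (ha' : ∀ t, t ∈ A ↔ t ∈ T ∧ a (p t) = 0) (hr : crk p A + 1 < crk p T) :
    ∃ l : W →ₗ[ℝ] ℝ, (∀ t ∈ A, l (p t) = 0) ∧ ¬ ∃ c : ℝ, ∀ t ∈ T, l (p t) = c * a (p t) := by
  have hex : ∃ x ∈ T, x ∉ A := by
    by_contra h
    push Not at h
    have := crk_mono (p := p) (show T ⊆ A from h)
    omega
  obtain ⟨x, hxT, hxA⟩ := hex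
  have hle : Module.finrank ℝ (Submodule.span ℝ (p '' (insert x A : Finset ι))) ≤ crk p A + 1 := by
    rw [Finset.coe_insert, Set.image_insert_eq, Submodule.span_insert]
    refine (Submodule.finrank_add_le_finrank_add_finrank _ _).trans ?_
    have := finrank_span_le_card (R := ℝ) ({p x} : Set W)
    simp at this
    unfold crk
    omega
  have hex2 : ∃ y ∈ T, p y ∉ Submodule.span ℝ (p '' (insert x A : Finset ι)) := by
    by_contra h
    push Not at h
    have : Submodule.span ℝ (p '' (T : Set ι)) ≤ Submodule.span ℝ (p '' (insert x A : Finset ι)) := by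
      rw [Submodule.span_le]
      rintro _ ⟨t, ht, rfl⟩
      exact h t ht
    have := Submodule.finrank_mono this
    unfold crk at hr hle
    omega
  obtain ⟨y, hyT, hy⟩ := hex2
  obtain ⟨l, hl, hly⟩ := exists_functional _ hy
  have hl' : ∀ t ∈ insert x A, l (p t) = 0 := fun t ht => hl _ (Submodule.subset_span ⟨t, ht, rfl⟩)
  refine ⟨l, fun t ht => hl' t (Finset.mem_insert_of_mem ht), ?_⟩
  rintro ⟨c, hc⟩
  have h1 := hc x hxT
  rw [hl' x (Finset.mem_insert_self _ _)] at h1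
  have h2 : a (p x) ≠ 0 := fun h => hxA ((ha' x).2 ⟨hxT, h⟩)
  have h3 : c = 0 := by
    rcases mul_eq_zero.1 h1.symm with h | h
    · exact h
    · exact absurd h h2
  exact hly (by rw [hc y hyT, h3, zero_mul])

theorem prop_of_rank {T A : Finset ι} {a : W →ₗ[ℝ] ℝ} 
    (ha' : ∀ t, t ∈ A ↔ t ∈ T ∧ a (p t) = 0) (hr : crk p T ≤ crk p A + 1)
    (l : W →ₗ[ℝ] ℝ) (hl : ∀ t ∈ A, l (p t) = 0) : ∃ c : ℝ, ∀ t ∈ T, l (p t) = c * a (p t) := by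
  by_cases hex : ∃ x ∈ T, x ∉ A
  swap
  · push Not at hex
    refine ⟨0, fun t ht => ?_⟩
    rw [hl t (hex t ht), zero_mul]
  obtain ⟨x, hxT, hxA⟩ := hex
  have h2 : a (p x) ≠ 0 := fun h => hxA ((ha' x).2 ⟨hxT, h⟩)
  refine ⟨l (p x) / a (p x), fun t ht => ?_⟩
  have hAT : A ⊆ T := fun t ht => ((ha' t).1 ht).1
  have hsub : insert x A ⊆ T := Finset.insert_subset hxT hAT
  have hlt : crk p A < crk p (insert x A) := by
    apply Submodule.finrank_lt_finrank_of_lt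
    refine lt_of_le_of_ne (Submodule.span_mono (Set.image_mono (by simp))) (fun he => h2 ?_)
    apply span_vanish (A := A) (fun t ht => ((ha' t).1 ht).2)
    rw [he]
    exact Submodule.subset_span ⟨x, by simp, rfl⟩
  have heq : Submodule.span ℝ (p '' (insert x A : Finset ι)) = Submodule.span ℝ (p '' (T : Set ι)) := by
    apply Submodule.eq_of_le_of_finrank_le
    · exact Submodule.span_mono (Set.image_mono (by exact_mod_cast hsub))
    · unfold crk at *
      omega
  have := span_vanish (A := insert x A) (p := p) (l := l - (l (p x) / a (p x)) • a) (x := p t) ?_ ?_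
  · simpa [sub_eq_zero] using this
  · intro s hs
    rcases Finset.mem_insert.1 hs with rfl | hs
    · simp; field_simp; simp
    · simp [hl s hs, ((ha' s).1 hs).2]
  · rw [heq]
    exact Submodule.subset_span ⟨t, ht, rfl⟩

/-- Krein-Milman -/
theorem exists_atom : ∀ (n : ℕ) (T A : Finset ι), T.card ≤ n → Fc p T A → A ≠ T →
    ∀ l : W →ₗ[ℝ] ℝ, (∀ t ∈ A, l (p t) = 0) → (∃ t ∈ T, l (p t) < 0) →
    ∃ B, Fc p T B ∧ A ⊆ B ∧ crk p B = crk p A + 1 ∧ ∀ t ∈ B, t ∉ A → l (p t) < 0 := by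
  intro n
  induction n with
  | zero =>
    intro T A hn hA hne
    have : T = ∅ := by simpa using hn
    subst this
    exact absurd (Finset.subset_empty.1 hA.subset) hne
  | succ n ih =>
    intro T A hn hA hne l hl hneg
    have hlt := hA.crk_lt subset_rfl (Finset.ssubset_iff_subset_ne.2 ⟨hA.subset, hne⟩)
    have hA0 := hA
    obtain ⟨a, ha, ha'⟩ := hA
    have hpos : ∀ t ∈ T, t ∉ A → 0 < a (p t) := fun t ht htA =>
      lt_of_le_of_ne (ha t ht) (fun h => htA ((ha' t).2 ⟨ht, h.symm⟩))
    have hprop : ∀ c : ℝ, (∀ t ∈ T, l (p t) = c * a (p t)) → c < 0 := by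
      intro c hc
      obtain ⟨t, ht, h⟩ := hneg
      rw [hc t ht] at h
      by_contra h'
      push Not at h'
      have := mul_nonneg h' (ha t ht)
      linarith
    by_cases hr : crk p T ≤ crk p A + 1
    · obtain ⟨c, hc⟩ := prop_of_rank ha' hr l hl
      refine ⟨T, Fc.refl T, hA0.subset, by omega, fun t ht htA => ?_⟩
      rw [hc t ht]
      exact mul_neg_of_neg_of_pos (hprop c hc) (hpos t ht htA)
    · push Not at hr
      -- find a proper face M
      have key : ∃ M, Fc p T M ∧ A ⊂ M ∧ M ≠ T ∧ ∀ t ∈ M, t ∉ A → l (p t) < 0 := by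
        by_cases hc : ∃ c : ℝ, ∀ t ∈ T, l (p t) = c * a (p t)
        · obtain ⟨c, hc⟩ := hc
          obtain ⟨l', hl', hnp⟩ := exists_nonprop ha' hr
          obtain ⟨c', M, hM, hAM, hM1, hM2⟩ := min_ratio ha ha' hne l' hl'
          refine ⟨M, hM, hAM, ?_, ?_⟩
          · rintro rfl
            exact hnp ⟨c', hM1⟩
          · intro t ht htA
            have := hM.subset ht
            rw [hc t this]
            exact mul_neg_of_neg_of_pos (hprop c hc) (hpos t this htA)
        · obtain ⟨c', M, hM, hAM, hM1, hM2⟩ := min_ratio ha ha' hne l hl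
          refine ⟨M, hM, hAM, ?_, ?_⟩
          · rintro rfl
            exact hc ⟨c', hM1⟩
          · intro t ht htA
            rw [hM1 t ht]
            apply mul_neg_of_neg_of_pos _ (hpos t (hM.subset ht) htA)
            obtain ⟨s, hs, hsn⟩ := hneg
            by_contra h'
            push Not at h'
            have h3 := mul_nonneg h' (ha s hs)
            by_cases hsM : s ∈ M
            · have := hM1 s hsM; linarith
            · have := hM2 s hs hsM; linarith
      obtain ⟨M, hM, hAM, hMT, hMn⟩ := key
      have hcard : M.card < T.card :=
        Finset.card_lt_card (Finset.ssubset_iff_subset_ne.2 ⟨hM.subset, hMT⟩)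
      obtain ⟨x, hx, hxA⟩ := Finset.exists_of_ssubset hAM
      obtain ⟨B, hB, h1, h2, h3⟩ := ih M A (by omega) (hA0.restrict hM.subset hAM.subset)
        hAM.ne l hl ⟨x, hx, hMn x hx hxA⟩
      exact ⟨B, hM.trans hB, h1, h2, h3⟩

theorem atoms_count {T A : Finset ι} (hA : Fc p T A) :
    crk p T ≤ crk p A + ((cfaces p T).filter (fun B => A ⊆ B ∧ crk p B = crk p A + 1)).card := by
  by_contra hlt
  push Not at hlt
  set 𝒜 := (cfaces p T).filter (fun B => A ⊆ B ∧ crk p B = crk p A + 1) with h𝒜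
  have hne : A ≠ T := by rintro rfl; omega
  have hex : ∀ B ∈ 𝒜, ∃ x ∈ B, x ∉ A := by
    intro B hB
    by_contra h
    push Not at h
    have := crk_mono (p := p) (show B ⊆ A from h)
    have h2 := (Finset.mem_filter.1 hB).2.2
    omega
  have : Nonempty ι := by
    by_contra h
    rw [not_nonempty_iff] at h
    exact hne (Finset.ext fun t => h.elim t)
  choose! r hr hrA using hex
  set U := Submodule.span ℝ (p '' (A : Set ι)) ⊔ Submodule.span ℝ (p '' (𝒜.image r : Finset ι)) with hU
  have hUr : Module.finrank ℝ U ≤ crk p A + 𝒜.card := by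
    refine (Submodule.finrank_add_le_finrank_add_finrank _ _).trans ?_
    have h1 := finrank_span_finset_le_card (R := ℝ) ((𝒜.image r).image p)
    have h2 : ((𝒜.image r).image p).card ≤ 𝒜.card :=
      Finset.card_image_le.trans Finset.card_image_le
    rw [Set.finrank, Finset.coe_image] at h1
    unfold crk
    omega
  have hy : ∃ y ∈ T, p y ∉ U := by
    by_contra h
    push Not at h
    have : Submodule.span ℝ (p '' (T : Set ι)) ≤ U := by
      rw [Submodule.span_le]
      rintro _ ⟨t, ht, rfl⟩
      exact h t ht
    have := Submodule.finrank_mono this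
    unfold crk at *
    omega
  obtain ⟨y, hyT, hyU⟩ := hy
  obtain ⟨l, hl, hly⟩ := exists_functional _ hyU
  have hlA : ∀ t ∈ A, l (p t) = 0 := fun t ht =>
    hl _ (Submodule.mem_sup_left (Submodule.subset_span ⟨t, ht, rfl⟩))
  have hlr : ∀ B ∈ 𝒜, l (p (r B)) = 0 := fun B hB =>
    hl _ (Submodule.mem_sup_right (Submodule.subset_span
      ⟨r B, by simpa using ⟨B, hB, rfl⟩, rfl⟩))
  rcases lt_or_gt_of_ne hly with h | h
  · obtain ⟨B, hB, h1, h2, h3⟩ := exists_atom _ T A le_rfl hA hne l hlA ⟨y, hyT, h⟩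
    have hB' : B ∈ 𝒜 := by simp [h𝒜, mem_cfaces, hB, h1, h2]
    have := h3 (r B) (hr B hB') (hrA B hB')
    rw [hlr B hB'] at this
    exact lt_irrefl _ this
  · obtain ⟨B, hB, h1, h2, h3⟩ := exists_atom _ T A le_rfl hA hne (-l)
      (fun t ht => by simp [hlA t ht]) ⟨y, hyT, by simpa using h⟩
    have hB' : B ∈ 𝒜 := by simp [h𝒜, mem_cfaces, hB, h1, h2]
    have := h3 (r B) (hr B hB') (hrA B hB')
    simp [hlr B hB'] at this

end Config

section Euler

variable {ι W : Type*} [AddCommGroup W] [Module ℝ W] {p : ι → W}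

noncomputable def posB (p : ι → W) (T A : Finset ι) (l : W →ₗ[ℝ] ℝ) : Finset (Finset ι) :=
  (cfaces p T).filter (fun B => A ⊆ B ∧ ∀ t ∈ B, t ∉ A → 0 < l (p t))

noncomputable def eulE (p : ι → W) (T A : Finset ι) (l : W →ₗ[ℝ] ℝ) : ℤ :=
  ∑ B ∈ posB p T A l, (-1 : ℤ) ^ crk p B

theorem mem_posB {T A B : Finset ι} {l : W →ₗ[ℝ] ℝ} :
    B ∈ posB p T A l ↔ Fc p T B ∧ A ⊆ B ∧ ∀ t ∈ B, t ∉ A → 0 < l (p t) := by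
  simp [posB, mem_cfaces]

theorem eulE_full {T A : Finset ι} {l : W →ₗ[ℝ] ℝ} (h : ∀ t ∈ T, t ∉ A → 0 < l (p t)) :
    eulE p T A l = ∑ B ∈ (cfaces p T).filter (fun B => A ⊆ B), (-1 : ℤ) ^ crk p B := by
  unfold eulE
  congr 1
  ext B
  simp only [mem_posB, Finset.mem_filter, mem_cfaces]
  constructor
  · tauto
  · rintro ⟨h1, h2⟩
    exact ⟨h1, h2, fun t ht => h t (h1.subset ht)⟩

theorem euler_step {T A : Finset ι} (hA : Fc p T A) (hne : A ≠ T)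
    (ih : ∀ T' A' : Finset ι, T'.card + A.card < A'.card + T.card → Fc p T' A' →
      ∀ l : W →ₗ[ℝ] ℝ, (∀ t ∈ A', l (p t) = 0) → (∃ t ∈ T', 0 < l (p t)) → eulE p T' A' l = 0)
    {a : W →ₗ[ℝ] ℝ} (ha : ∀ t ∈ T, 0 ≤ a (p t))
    (ha' : ∀ t, t ∈ A ↔ t ∈ T ∧ a (p t) = 0)
    (l : W →ₗ[ℝ] ℝ) (hl : ∀ t ∈ A, l (p t) = 0) (hp : ∃ t ∈ T, 0 < l (p t))
    (hnp : ¬ ∃ c : ℝ, ∀ t ∈ T, l (p t) = c * a (p t)) : eulE p T A l = 0 := by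
  have hpos : ∀ t ∈ T, t ∉ A → 0 < a (p t) := fun t ht htA =>
    lt_of_le_of_ne (ha t ht) (fun h => htA ((ha' t).2 ⟨ht, h.symm⟩))
  have ha0 : ∀ t ∈ A, a (p t) = 0 := fun t ht => ((ha' t).1 ht).2
  obtain ⟨c0, X, hX, hAX, hX1, hX2⟩ := min_ratio ha ha' hne (-l) (fun t ht => by simp [hl t ht])
  obtain ⟨C, rfl⟩ : ∃ C, c0 = -C := ⟨-c0, by ring⟩
  replace hX1 : ∀ t ∈ X, l (p t) = C * a (p t) := by
    intro t ht
    have := hX1 t ht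
    simp at this
    exact this
  replace hX2 : ∀ t ∈ T, t ∉ X → l (p t) < C * a (p t) := by
    intro t ht h
    have := hX2 t ht h
    simp at this
    exact this
  have hXT : X ≠ T := by rintro rfl; exact hnp ⟨C, hX1⟩
  have hle : ∀ t ∈ T, l (p t) ≤ C * a (p t) := by
    intro t ht
    by_cases h : t ∈ X
    · exact (hX1 t h).le
    · exact (hX2 t ht h).le
  have hC : 0 < C := by
    obtain ⟨t, ht, h⟩ := hp
    have h1 := hle t ht
    by_contra h2
    push Not at h2
    have := mul_nonpos_of_nonpos_of_nonneg h2 (ha t ht)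
    linarith
  let M : Finset ι → Finset ι := fun B =>
    B.filter (fun t => ∀ s ∈ B, l (p t) * a (p s) ≤ l (p s) * a (p t))
  -- structure of `M B`
  have hM : ∀ B, Fc p T B → A ⊆ B → B ≠ A → ∃ c : ℝ, Fc p T (M B) ∧ A ⊂ M B ∧
      (∀ t ∈ M B, l (p t) = c * a (p t)) ∧ ∀ t ∈ B, t ∉ M B → c * a (p t) < l (p t) := by
    intro B hB hAB hBA
    have hAB' : ∀ t, t ∈ A ↔ t ∈ B ∧ a (p t) = 0 := fun t =>
      ⟨fun h => ⟨hAB h, ha0 t h⟩, fun h => (ha' t).2 ⟨hB.subset h.1, h.2⟩⟩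
    obtain ⟨c, N, hN, hAN, hN1, hN2⟩ := min_ratio (fun t ht => ha t (hB.subset ht)) hAB'
      hBA.symm l hl
    have hcle : ∀ t ∈ B, c * a (p t) ≤ l (p t) := by
      intro t ht
      by_cases h : t ∈ N
      · exact (hN1 t h).ge
      · exact (hN2 t ht h).le
    have : M B = N := by
      ext t
      simp only [M, Finset.mem_filter]
      constructor
      · rintro ⟨htB, h⟩
        by_contra htN
        obtain ⟨s, hs, hsA⟩ := Finset.exists_of_ssubset hAN
        have h1 := h s (hN.subset hs)
        rw [hN1 s hs] at h1
        have h2 := hN2 t htB htN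
        have h3 := hpos s (hB.subset (hN.subset hs)) hsA
        have h4 := mul_lt_mul_of_pos_right h2 h3
        nlinarith
      · intro ht
        refine ⟨hN.subset ht, fun s hs => ?_⟩
        rw [hN1 t ht]
        have h1 := mul_le_mul_of_nonneg_right (hcle s hs) (ha t (hB.subset (hN.subset ht)))
        nlinarith
    rw [this]
    exact ⟨c, hB.trans hN, hAN, hN1, hN2⟩
  have hMA : M A = A := by
    apply Finset.filter_true_of_mem
    intro t ht s hs
    rw [hl t ht, hl s hs]; simp
  have hmaps : ∀ B ∈ posB p T A l, M B ∈ (cfaces p T).filter (fun B => A ⊆ B) := by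
    intro B hB
    rw [mem_posB] at hB
    rw [Finset.mem_filter, mem_cfaces]
    by_cases h : B = A
    · rw [h, hMA]; exact ⟨hA, subset_rfl⟩
    · obtain ⟨c, h1, h2, _⟩ := hM B hB.1 hB.2.1 h
      exact ⟨h1, h2.subset⟩
  unfold eulE
  rw [← Finset.sum_fiberwise_of_maps_to hmaps]
  have inner : ∀ N ∈ (cfaces p T).filter (fun B => A ⊆ B),
      ∑ B ∈ (posB p T A l).filter (fun B => M B = N), (-1 : ℤ) ^ crk p B =
        if N ⊆ X then (-1 : ℤ) ^ crk p N else 0 := by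
    intro N hN
    rw [Finset.mem_filter, mem_cfaces] at hN
    obtain ⟨hN, hAN⟩ := hN
    by_cases hNA : N = A
    · subst hNA
      have : (posB p T N l).filter (fun B => M B = N) = {N} := by
        ext B
        simp only [Finset.mem_filter, mem_posB, Finset.mem_singleton]
        constructor
        · rintro ⟨⟨h1, h2, h3⟩, h4⟩
          by_contra h
          obtain ⟨c, _, h5, _⟩ := hM B h1 h2 h
          rw [h4] at h5
          exact h5.ne rfl
        · rintro rfl
          exact ⟨⟨hN, subset_rfl, fun t h h' => absurd h h'⟩, hMA⟩
      rw [this, if_pos hAX.subset]; simp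
    · have hANs : A ⊂ N := Finset.ssubset_iff_subset_ne.2 ⟨hAN, fun h => hNA h.symm⟩
      obtain ⟨x, hx, hxA⟩ := Finset.exists_of_ssubset hANs
      have hax := hpos x (hN.subset hx) hxA
      by_cases hc : ∃ c : ℝ, 0 < c ∧ ∀ t ∈ N, l (p t) = c * a (p t)
      · obtain ⟨c, hc0, hc⟩ := hc
        have hfib : (posB p T A l).filter (fun B => M B = N) = posB p T N (l - c • a) := by
          ext B
          simp only [Finset.mem_filter, mem_posB]
          constructor
          · rintro ⟨⟨h1, h2, h3⟩, h4⟩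
            have hBA : B ≠ A := by
              rintro rfl
              rw [hMA] at h4; exact hNA h4.symm
            obtain ⟨c', g1, g2, g3, g4⟩ := hM B h1 h2 hBA
            rw [h4] at g1 g2 g3 g4
            have hcc : c = c' := by
              have e1 := hc x hx
              rw [g3 x hx] at e1
              exact (mul_right_cancel₀ hax.ne' e1).symm
            refine ⟨h1, ?_, ?_⟩
            · rw [← h4]; exact Finset.filter_subset _ _
            · intro t ht htN
              have := g4 t ht htN
              rw [hcc]
              simpa using this
          · rintro ⟨h1, h2, h3⟩
            have h3' : ∀ t ∈ B, t ∉ N → c * a (p t) < l (p t) := by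
              intro t ht htN
              have := h3 t ht htN
              simpa using this
            have hBA : B ≠ A := by
              rintro rfl
              exact hNA (Finset.Subset.antisymm h2 hAN)
            refine ⟨⟨h1, hAN.trans h2, ?_⟩, ?_⟩
            · intro t ht htA
              have e := mul_pos hc0 (hpos t (h1.subset ht) htA)
              by_cases htN : t ∈ N
              · rw [hc t htN]; exact e
              · exact e.trans (h3' t ht htN)
            · obtain ⟨c', g1, g2, g3, g4⟩ := hM B h1 (hAN.trans h2) hBA
              have hMB : M B ⊆ B := Finset.filter_subset _ _
              have hcc : c = c' := by
                obtain ⟨y, hy, hyA⟩ := Finset.exists_of_ssubset g2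
                have hay := hpos y (g1.subset hy) hyA
                have e1 : c * a (p y) ≤ c' * a (p y) := by
                  rw [← g3 y hy]
                  by_cases hyN : y ∈ N
                  · rw [hc y hyN]
                  · exact (h3' y (hMB hy) hyN).le
                have e2 : c' * a (p x) ≤ c * a (p x) := by
                  rw [← hc x hx]
                  by_cases hxM : x ∈ M B
                  · rw [g3 x hxM]
                  · exact (g4 x (h2 hx) hxM).le
                exact le_antisymm (le_of_mul_le_mul_right e1 hay) (le_of_mul_le_mul_right e2 hax)
              subst hcc
              apply Finset.Subset.antisymm
              · intro t ht
                by_contra htN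
                have := h3' t (hMB ht) htN
                rw [g3 t ht] at this
                exact lt_irrefl _ this
              · intro t ht
                by_contra htN
                have := g4 t (h2 ht) htN
                rw [hc t ht] at this
                exact lt_irrefl _ this
        rw [hfib]
        by_cases hcC : c = C
        · subst hcC
          have hNX : N ⊆ X := by
            intro t ht
            by_contra h
            have := hX2 t (hN.subset ht) h
            rw [hc t ht] at this
            exact lt_irrefl _ this
          rw [if_pos hNX]
          have : posB p T N (l - c • a) = {N} := by
            ext B
            simp only [mem_posB, Finset.mem_singleton]
            constructor
            · rintro ⟨h1, h2, h3⟩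
              apply Finset.Subset.antisymm _ h2
              intro t ht
              by_contra htN
              have e1 := h3 t ht htN
              have e2 := hle t (h1.subset ht)
              simp at e1
              linarith
            · rintro rfl
              exact ⟨hN, subset_rfl, fun t h h' => absurd h h'⟩
          rw [this]; simp
        · have hcC' : c < C := by
            refine lt_of_le_of_ne ?_ hcC
            have := hle x (hN.subset hx)
            rw [hc x hx] at this
            exact le_of_mul_le_mul_right this hax
          have hNX : ¬ N ⊆ X := by
            intro h
            have e1 := hX1 x (h hx)
            rw [hc x hx] at e1
            exact hcC (mul_right_cancel₀ hax.ne' e1)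
          rw [if_neg hNX]
          refine ih T N ?_ hN _ ?_ ?_
          · have := Finset.card_lt_card hANs; omega
          · intro t ht
            simp [hc t ht]
          · obtain ⟨y, hy, hyA⟩ := Finset.exists_of_ssubset hAX
            refine ⟨y, hX.subset hy, ?_⟩
            have e1 := hX1 y hy
            have e2 := mul_lt_mul_of_pos_right hcC' (hpos y (hX.subset hy) hyA)
            simp [e1]
            exact e2
      · have hNX : ¬ N ⊆ X := fun h => hc ⟨C, hC, fun t ht => hX1 t (h ht)⟩
        rw [if_neg hNX]
        apply Finset.sum_eq_zero
        intro B hB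
        exfalso
        simp only [Finset.mem_filter, mem_posB] at hB
        obtain ⟨⟨h1, h2, h3⟩, h4⟩ := hB
        have hBA : B ≠ A := by
          rintro rfl
          rw [hMA] at h4; exact hNA h4.symm
        obtain ⟨c', g1, g2, g3, g4⟩ := hM B h1 h2 hBA
        have hMB : M B ⊆ B := Finset.filter_subset _ _
        rw [h4] at g1 g2 g3 g4 hMB
        refine hc ⟨c', ?_, g3⟩
        have := h3 x (hMB hx) hxA
        rw [g3 x hx] at this
        exact pos_of_mul_pos_left this hax.le
  rw [Finset.sum_congr rfl inner, ← Finset.sum_filter]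
  have hXsum : (((cfaces p T).filter (fun B => A ⊆ B)).filter (fun N => N ⊆ X)) =
      (cfaces p X).filter (fun B => A ⊆ B) := by
    ext B
    simp only [Finset.mem_filter, mem_cfaces]
    constructor
    · rintro ⟨⟨h1, h2⟩, h3⟩
      exact ⟨h1.restrict hX.subset h3, h2⟩
    · rintro ⟨h1, h2⟩
      exact ⟨⟨hX.trans h1, h2⟩, h1.subset⟩
  rw [hXsum, ← eulE_full (l := a) (fun t ht htA => hpos t (hX.subset ht) htA)]
  refine ih X A ?_ (hA.restrict hX.subset hAX.subset) a ha0 ?_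
  · have := Finset.card_lt_card (Finset.ssubset_iff_subset_ne.2 ⟨hX.subset, hXT⟩)
    omega
  · obtain ⟨y, hy, hyA⟩ := Finset.exists_of_ssubset hAX
    exact ⟨y, hy, hpos y (hX.subset hy) hyA⟩

theorem euler_aux : ∀ (n : ℕ) (T A : Finset ι), T.card ≤ A.card + n → Fc p T A →
      ∀ l : W →ₗ[ℝ] ℝ, (∀ t ∈ A, l (p t) = 0) → (∃ t ∈ T, 0 < l (p t)) → eulE p T A l = 0 := by
  intro n
  induction n with
  | zero =>
    intro T A hn hA l hl hp
    have : A = T := Finset.eq_of_subset_of_card_le hA.subset (by omega)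
    subst this
    obtain ⟨t, ht, h⟩ := hp
    rw [hl t ht] at h
    exact absurd h (lt_irrefl _)
  | succ n ih =>
    intro T A hn hA l hl hp
    have hne : A ≠ T := by
      rintro rfl
      obtain ⟨t, ht, h⟩ := hp
      rw [hl t ht] at h
      exact absurd h (lt_irrefl _)
    have hA0 := hA
    have hlt := hA.crk_lt subset_rfl (Finset.ssubset_iff_subset_ne.2 ⟨hA.subset, hne⟩)
    have ih' : ∀ T' A' : Finset ι, T'.card + A.card < A'.card + T.card → Fc p T' A' →
        ∀ l : W →ₗ[ℝ] ℝ, (∀ t ∈ A', l (p t) = 0) → (∃ t ∈ T', 0 < l (p t)) →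
          eulE p T' A' l = 0 := fun T' A' h => ih T' A' (by omega)
    obtain ⟨a, ha, ha'⟩ := hA
    have hpos : ∀ t ∈ T, t ∉ A → 0 < a (p t) := fun t ht htA =>
      lt_of_le_of_ne (ha t ht) (fun h => htA ((ha' t).2 ⟨ht, h.symm⟩))
    by_cases hnp : ∃ c : ℝ, ∀ t ∈ T, l (p t) = c * a (p t)
    swap
    · exact euler_step hA0 hne ih' ha ha' l hl hp hnp
    obtain ⟨c, hc⟩ := hnp
    have hc0 : 0 < c := by
      obtain ⟨t, ht, h⟩ := hp
      rw [hc t ht] at h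
      exact pos_of_mul_pos_left h (ha t ht)
    rw [eulE_full (fun t ht htA => by
      rw [hc t ht]; exact mul_pos hc0 (hpos t ht htA))]
    by_cases hr : crk p T ≤ crk p A + 1
    · have : (cfaces p T).filter (fun B => A ⊆ B) = {A, T} := by
        ext B
        simp only [Finset.mem_filter, mem_cfaces, Finset.mem_insert, Finset.mem_singleton]
        constructor
        · rintro ⟨h1, h2⟩
          by_cases h3 : crk p B ≤ crk p A
          · left; exact (hA0.eq_of_crk h1.subset h2 h3).symm
          · right; exact h1.eq_of_crk subset_rfl h1.subset (by omega)
        · rintro (rfl | rfl)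
          · exact ⟨hA0, subset_rfl⟩
          · exact ⟨Fc.refl _, hA0.subset⟩
      rw [this, Finset.sum_pair hne, show crk p T = crk p A + 1 by omega, pow_succ]
      ring
    · push Not at hr
      obtain ⟨l', hl', hnp⟩ := exists_nonprop ha' hr
      obtain ⟨c', M, hM, hAM, hM1, hM2⟩ := min_ratio ha ha' hne l' hl'
      have hge : ∀ t ∈ T, c' * a (p t) ≤ l' (p t) := by
        intro t ht
        by_cases h : t ∈ M
        · exact (hM1 t h).ge
        · exact (hM2 t ht h).le
      have hpos' : ∀ t ∈ T, t ∉ A → 0 < (l' + (1 - c') • a) (p t) := by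
        intro t ht htA
        have h1 := hge t ht
        have h2 := hpos t ht htA
        simp only [LinearMap.add_apply, LinearMap.smul_apply, smul_eq_mul]
        linarith
      rw [← eulE_full hpos']
      refine euler_step hA0 hne ih' ha ha' _ ?_ ?_ ?_
      · intro t ht
        simp [hl' t ht, ((ha' t).1 ht).2]
      · obtain ⟨x, hx, hxA⟩ := Finset.exists_of_ssubset hAM
        exact ⟨x, hM.subset hx, hpos' x (hM.subset hx) hxA⟩
      · rintro ⟨k, hk⟩
        refine hnp ⟨k - (1 - c'), fun t ht => ?_⟩
        have := hk t ht
        simp only [LinearMap.add_apply, LinearMap.smul_apply, smul_eq_mul] at this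
        linarith

theorem euler_cfaces {T A : Finset ι} (hA : Fc p T A) (hne : A ≠ T) :
    ∑ B ∈ (cfaces p T).filter (fun B => A ⊆ B), (-1 : ℤ) ^ crk p B = 0 := by
  have hA0 := hA
  obtain ⟨a, ha, ha'⟩ := hA
  have hpos : ∀ t ∈ T, t ∉ A → 0 < a (p t) := fun t ht htA =>
    lt_of_le_of_ne (ha t ht) (fun h => htA ((ha' t).2 ⟨ht, h.symm⟩))
  rw [← eulE_full hpos]
  refine euler_aux T.card T A (by omega) hA0 a (fun t ht => ((ha' t).1 ht).2) ?_
  obtain ⟨x, hx, hxA⟩ := Finset.exists_of_ssubset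
    (Finset.ssubset_iff_subset_ne.2 ⟨hA0.subset, hne⟩)
  exact ⟨x, hx, hpos x hx hxA⟩

end Euler

section Count

variable {ι W : Type*} [AddCommGroup W] [Module ℝ W] {p : ι → W}

noncomputable def lv (p : ι → W) (T : Finset ι) (k : ℕ) : Finset (Finset ι) :=
  (cfaces p T).filter (fun B => crk p B = k)

theorem mem_lv {T B : Finset ι} {k : ℕ} : B ∈ lv p T k ↔ Fc p T B ∧ crk p B = k := by
  simp [lv, mem_cfaces]

theorem mem_lv_sub {T B C : Finset ι} (hB : Fc p T B) {k : ℕ} :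
    C ∈ lv p B k ↔ C ∈ lv p T k ∧ C ⊆ B := by
  rw [mem_lv, mem_lv]
  constructor
  · rintro ⟨h1, h2⟩
    exact ⟨⟨hB.trans h1, h2⟩, h1.subset⟩
  · rintro ⟨⟨h1, h2⟩, h3⟩
    exact ⟨h1.restrict hB.subset h3, h2⟩

theorem atoms_lv {T A : Finset ι} {k n : ℕ} (hA : A ∈ lv p T k) (hn : crk p T = n) :
    n ≤ k + ((lv p T (k + 1)).filter (fun B => A ⊆ B)).card := by
  rw [mem_lv] at hA
  have := atoms_count hA.1
  rw [hA.2, hn] at this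
  refine this.trans (Nat.add_le_add_left (Finset.card_le_card ?_) _)
  intro B
  simp only [Finset.mem_filter, mem_lv, mem_cfaces]
  tauto

theorem lv_zero {T : Finset ι} (hT : Fc p T ∅) : lv p T 0 = {∅} := by
  ext B
  rw [mem_lv, Finset.mem_singleton]
  constructor
  · rintro ⟨h1, h2⟩
    exact (hT.eq_of_crk h1.subset (Finset.empty_subset _) (by omega)).symm
  · rintro rfl
    exact ⟨hT, crk_empty⟩

theorem lv_top {T : Finset ι} : lv p T (crk p T) = {T} := by
  ext B
  rw [mem_lv, Finset.mem_singleton]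
  constructor
  · rintro ⟨h1, h2⟩
    exact h1.eq_of_crk subset_rfl h1.subset (by omega)
  · rintro rfl
    exact ⟨Fc.refl _, rfl⟩

theorem two_verts {T : Finset ι} (hT : Fc p T ∅) (hr : crk p T = 2) : (lv p T 1).card = 2 := by
  have hne : ∅ ≠ T := by
    rintro rfl
    rw [crk_empty] at hr
    omega
  have h := euler_cfaces hT hne
  have h2 : ∀ B ∈ (cfaces p T).filter (fun B => ∅ ⊆ B), crk p B ∈ Finset.range 3 := by
    intro B hB
    rw [Finset.mem_filter, mem_cfaces] at hB
    have := crk_mono (p := p) hB.1.subset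
    rw [Finset.mem_range]; omega
  rw [← Finset.sum_fiberwise_of_maps_to h2] at h
  have h3 : ∀ k, ∑ B ∈ ((cfaces p T).filter (fun B => ∅ ⊆ B)).filter (fun B => crk p B = k),
      (-1 : ℤ) ^ crk p B = (lv p T k).card * (-1) ^ k := by
    intro k
    have : ((cfaces p T).filter (fun B => ∅ ⊆ B)).filter (fun B => crk p B = k) = lv p T k := by
      simp [lv]
    rw [this, Finset.sum_congr rfl (g := fun _ => (-1 : ℤ) ^ k)]
    · simp
    · intro B hB
      rw [(mem_lv.1 hB).2]
  simp only [h3, Finset.sum_range_succ, Finset.sum_range_zero] at h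
  have h4 : (lv p T 2).card = 1 := by rw [← hr, lv_top]; simp
  rw [lv_zero hT, h4] at h
  simp at h
  omega

theorem eq_of_common {T A B C : Finset ι} (hA : Fc p T A) (hB : Fc p T B) (hC : Fc p T C)
    (h1 : crk p A ≤ crk p C + 1) (h2 : crk p B ≤ crk p C + 1) (hCA : C ⊆ A) (hCB : C ⊆ B)
    {x : ι} (hxA : x ∈ A) (hxB : x ∈ B) (hxC : x ∉ C) : A = B := by
  have hI := hA.inter hB
  have hlt : crk p C < crk p (A ∩ B) := by
    apply hC.crk_lt hI.subset
    rw [Finset.ssubset_iff_of_subset (Finset.subset_inter hCA hCB)]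
    exact ⟨x, Finset.mem_inter.2 ⟨hxA, hxB⟩, hxC⟩
  have e1 := hI.eq_of_crk hA.subset Finset.inter_subset_left (by omega)
  have e2 := hI.eq_of_crk hB.subset Finset.inter_subset_right (by omega)
  exact e1.symm.trans e2

theorem lv_exists_notMem {T A B : Finset ι} {k : ℕ} (hA : A ∈ lv p T k) (hB : B ∈ lv p T k)
    (hne : A ≠ B) : ∃ x ∈ A, x ∉ B := by
  by_contra h
  push Not at h
  rw [mem_lv] at hA hB
  exact hne (hA.1.eq_of_crk hB.1.subset h (by omega))

theorem other_vert {T e v : Finset ι} (hT : Fc p T ∅) (he : e ∈ lv p T 2) :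
    ∃ u ∈ lv p T 1, u ⊆ e ∧ u ≠ v := by
  rw [mem_lv] at he
  have h := two_verts (hT.restrict he.1.subset (Finset.empty_subset _)) he.2
  obtain ⟨u, hu, huv⟩ := Finset.exists_mem_ne (by omega : 1 < (lv p e 1).card) v
  rw [mem_lv_sub he.1] at hu
  exact ⟨u, hu.1, hu.2, huv⟩

noncomputable def farR (p : ι → W) (F v : Finset ι) : Finset (Finset ι) :=
  (lv p F 1).filter (fun x => ∀ e ∈ lv p F 2, v ⊆ e → ¬ x ⊆ e)

theorem farR_card {F v : Finset ι} (hF : Fc p F ∅) (hr : crk p F = 3) (hv : v ∈ lv p F 1) :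
    (farR p F v).card + 3 ≤ (lv p F 1).card := by
  have h2 := atoms_lv hv hr
  obtain ⟨e1, he1, e2, he2, hne⟩ := Finset.one_lt_card.1
    (by omega : 1 < ((lv p F (1 + 1)).filter (fun B => v ⊆ B)).card)
  rw [Finset.mem_filter] at he1 he2
  obtain ⟨u1, hu1, hu1e, hu1v⟩ := other_vert (v := v) hF he1.1
  obtain ⟨u2, hu2, hu2e, hu2v⟩ := other_vert (v := v) hF he2.1
  have hu : u1 ≠ u2 := by
    rintro rfl
    obtain ⟨x, hx, hxv⟩ := lv_exists_notMem hu1 hv hu1v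
    refine hne (eq_of_common (mem_lv.1 he1.1).1 (mem_lv.1 he2.1).1 (mem_lv.1 hv).1 ?_ ?_
      he1.2 he2.2 (hu1e hx) (hu2e hx) hxv)
    · rw [(mem_lv.1 he1.1).2, (mem_lv.1 hv).2]
    · rw [(mem_lv.1 he2.1).2, (mem_lv.1 hv).2]
  have hc : ({v, u1, u2} : Finset (Finset ι)).card = 3 := by
    rw [Finset.card_eq_three]
    exact ⟨v, u1, u2, hu1v.symm, hu2v.symm, hu, rfl⟩
  rw [← hc, ← Finset.card_union_of_disjoint]
  · apply Finset.card_le_card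
    apply Finset.union_subset (Finset.filter_subset _ _)
    intro x hx
    simp only [Finset.mem_insert, Finset.mem_singleton] at hx
    rcases hx with rfl | rfl | rfl <;> assumption
  · rw [Finset.disjoint_right]
    intro x hx hxR
    have hR := (Finset.mem_filter.1 hxR).2
    simp only [Finset.mem_insert, Finset.mem_singleton] at hx
    rcases hx with rfl | rfl | rfl
    · exact hR e1 he1.1 he1.2 he1.2
    · exact hR e1 he1.1 he1.2 hu1e
    · exact hR e2 he2.1 he2.2 hu2e

theorem connected {T : Finset ι} (hT : Fc p T ∅) {S : Finset (Finset ι)}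
    (hS : S ⊆ lv p T 1) (hne : S.Nonempty) {w : Finset ι} (hw : w ∈ lv p T 1) (hwS : w ∉ S) :
    ∃ u ∈ S, ∃ v ∈ lv p T 1, v ∉ S ∧ ∃ e ∈ lv p T 2, u ⊆ e ∧ v ⊆ e := by
  obtain ⟨a, ha, ha'⟩ := id hT
  have hpos : ∀ t ∈ T, 0 < a (p t) := fun t ht =>
    lt_of_le_of_ne (ha t ht) (fun h => by simpa using (ha' t).2 ⟨ht, h.symm⟩)
  obtain ⟨b, hb, hb'⟩ := id (mem_lv.1 hw).1
  have hex : ∀ u ∈ lv p T 1, ∃ c : ℝ, ∀ t ∈ u, b (p t) = c * a (p t) := by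
    intro u hu
    rw [mem_lv] at hu
    refine prop_of_rank (A := ∅) (fun t => ⟨fun h => by simp at h, fun h => ?_⟩) ?_ b (by simp)
    · exact absurd h.2 (hpos t (hu.1.subset h.1)).ne'
    · rw [hu.2, crk_empty]
  choose! c hc using hex
  obtain ⟨u, huS, hmin⟩ := Finset.exists_min_image S c hne
  have hu := hS huS
  obtain ⟨x, hxu, hxw⟩ := lv_exists_notMem hu hw (fun h => hwS (h ▸ huS))
  obtain ⟨y, hyw, hyu⟩ := lv_exists_notMem hw hu (fun h => hwS (h ▸ huS))
  have hxT := (mem_lv.1 hu).1.subset hxu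
  have hyT := (mem_lv.1 hw).1.subset hyw
  have hcpos : 0 < c u := by
    have h1 : 0 < b (p x) := lt_of_le_of_ne (hb x hxT) (fun h => hxw ((hb' x).2 ⟨hxT, h.symm⟩))
    rw [hc u hu x hxu] at h1
    exact pos_of_mul_pos_left h1 (hpos x hxT).le
  obtain ⟨e, he, hue, hre, hneg⟩ := exists_atom _ T u le_rfl (mem_lv.1 hu).1
    (by rintro rfl; exact hyu hyT) (b - c u • a) (fun t ht => by simp [hc u hu t ht])
    ⟨y, hyT, by
      have := mul_pos hcpos (hpos y hyT)
      simp [((hb' y).1 hyw).2]; exact this⟩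
  have he2 : e ∈ lv p T 2 := mem_lv.2 ⟨he, by rw [hre, (mem_lv.1 hu).2]⟩
  obtain ⟨v, hv, hve, hvu⟩ := other_vert (v := u) hT he2
  refine ⟨u, huS, v, hv, fun hvS => ?_, e, he2, hue, hve⟩
  obtain ⟨z, hzv, hzu⟩ := lv_exists_notMem hv hu hvu
  have h1 := hneg z (hve hzv) hzu
  have h2 := hmin v hvS
  have h3 := mul_le_mul_of_nonneg_right h2 (hpos z (he.subset (hve hzv))).le
  simp [hc v hv z hzv] at h1
  linarith

noncomputable def degv (p : ι → W) (T v : Finset ι) : Finset (Finset ι) :=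
  (lv p T 2).filter (fun e => v ⊆ e)

noncomputable def satX (p : ι → W) (T : Finset ι) (S : Finset (Finset ι)) : Finset (Finset ι) :=
  (lv p T 1).filter (fun x => ∃ F ∈ lv p T 3, (∃ u ∈ S, u ⊆ F) ∧ x ⊆ F)

noncomputable def goodE (p : ι → W) (T : Finset ι) (S : Finset (Finset ι)) (v : Finset ι) :
    Finset (Finset ι) :=
  (degv p T v).filter (fun e => ∃ F ∈ lv p T 3, (∃ u ∈ S, u ⊆ F) ∧ e ⊆ F)

theorem satX_step {T : Finset ι} (hT : Fc p T ∅) {S : Finset (Finset ι)} {v : Finset ι}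
    (hv : v ∈ lv p T 1) :
    ((satX p T (insert v S)).card : ℤ) ≤ (insert v (satX p T S)).card +
      ((degv p T v).card - (goodE p T S v).card) +
      ∑ F ∈ (lv p T 3).filter (fun F => v ⊆ F ∧ ¬ ∃ u ∈ S, u ⊆ F), (((lv p F 1).card : ℤ) - 3) := by
  set 𝓕 := (lv p T 3).filter (fun F => v ⊆ F ∧ ¬ ∃ u ∈ S, u ⊆ F) with h𝓕
  have hsub : satX p T (insert v S) ⊆ insert v (satX p T S) ∪
      (degv p T v \ goodE p T S v).biUnion (fun e => (lv p e 1).erase v) ∪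
      𝓕.biUnion (fun F => farR p F v) := by
    intro x hx
    simp only [satX, Finset.mem_filter] at hx
    obtain ⟨hx, F, hF, ⟨u, hu, huF⟩, hxF⟩ := hx
    rw [Finset.mem_union, Finset.mem_union]
    by_cases hS : ∃ u ∈ S, u ⊆ F
    · left; left
      apply Finset.mem_insert_of_mem
      simp only [satX, Finset.mem_filter]
      exact ⟨hx, F, hF, hS, hxF⟩
    · have huv : u = v := by
        rcases Finset.mem_insert.1 hu with h | h
        · exact h
        · exact absurd ⟨u, h, huF⟩ hS
      subst huv
      by_cases hxv : x = u
      · left; left; rw [hxv]; exact Finset.mem_insert_self _ _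
      by_cases hR : ∃ e ∈ lv p F 2, u ⊆ e ∧ x ⊆ e
      · left
        obtain ⟨e, he, hue, hxe⟩ := hR
        rw [mem_lv_sub (mem_lv.1 hF).1] at he
        have hed : e ∈ degv p T u := Finset.mem_filter.2 ⟨he.1, hue⟩
        by_cases hg : e ∈ goodE p T S u
        · left
          obtain ⟨_, F', hF', hSF', heF'⟩ := Finset.mem_filter.1 hg
          apply Finset.mem_insert_of_mem
          simp only [satX, Finset.mem_filter]
          exact ⟨hx, F', hF', hSF', hxe.trans heF'⟩
        · right
          rw [Finset.mem_biUnion]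
          refine ⟨e, Finset.mem_sdiff.2 ⟨hed, hg⟩, Finset.mem_erase.2 ⟨hxv, ?_⟩⟩
          rw [mem_lv_sub (mem_lv.1 he.1).1]
          exact ⟨hx, hxe⟩
      · right
        rw [Finset.mem_biUnion]
        refine ⟨F, Finset.mem_filter.2 ⟨hF, huF, hS⟩, Finset.mem_filter.2 ⟨?_, ?_⟩⟩
        · rw [mem_lv_sub (mem_lv.1 hF).1]; exact ⟨hx, hxF⟩
        · intro e he hue hxe
          exact hR ⟨e, he, hue, hxe⟩
  have h1 := Finset.card_le_card hsub
  have h2 := Finset.card_union_le (insert v (satX p T S) ∪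
      (degv p T v \ goodE p T S v).biUnion (fun e => (lv p e 1).erase v))
      (𝓕.biUnion (fun F => farR p F v))
  have h3 := Finset.card_union_le (insert v (satX p T S))
      ((degv p T v \ goodE p T S v).biUnion (fun e => (lv p e 1).erase v))
  have h4 : ((degv p T v \ goodE p T S v).biUnion (fun e => (lv p e 1).erase v)).card ≤
      (degv p T v \ goodE p T S v).card * 1 := by
    apply Finset.card_biUnion_le_card_mul
    intro e he
    have he := Finset.mem_filter.1 (Finset.mem_sdiff.1 he).1
    have heT := (mem_lv.1 he.1).1
    rw [Finset.card_erase_of_mem, two_verts (hT.restrict heT.subset (Finset.empty_subset _))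
      (mem_lv.1 he.1).2]
    rw [mem_lv_sub heT]
    exact ⟨hv, he.2⟩
  have h5 : (degv p T v \ goodE p T S v).card + (goodE p T S v).card = (degv p T v).card :=
    Finset.card_sdiff_add_card_eq_card (Finset.filter_subset _ _)
  have h6 : ((𝓕.biUnion (fun F => farR p F v)).card : ℤ) ≤
      ∑ F ∈ 𝓕, (((lv p F 1).card : ℤ) - 3) := by
    have : ((𝓕.biUnion (fun F => farR p F v)).card : ℤ) ≤ ∑ F ∈ 𝓕, ((farR p F v).card : ℤ) := by
      exact_mod_cast Finset.card_biUnion_le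
    refine this.trans (Finset.sum_le_sum fun F hF => ?_)
    obtain ⟨hF, hvF, _⟩ := Finset.mem_filter.1 hF
    have hFT := (mem_lv.1 hF).1
    have := farR_card (v := v) (hT.restrict hFT.subset (Finset.empty_subset _)) (mem_lv.1 hF).2
      ((mem_lv_sub hFT).2 ⟨hv, hvF⟩)
    omega
  omega

theorem good_count {T : Finset ι} {d : ℕ} (hr : crk p T = d + 1) (hd : 2 ≤ d)
    {S : Finset (Finset ι)} {u v e : Finset ι} (hu : u ∈ S)
    (hv : v ∈ lv p T 1) (he : e ∈ lv p T 2) (hue : u ⊆ e) (hve : v ⊆ e) :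
    d ≤ (goodE p T S v).card ∧ ∃ F ∈ lv p T 3, e ⊆ F := by
  have h1 := atoms_lv he hr
  set 𝓕 := (lv p T (2 + 1)).filter (fun B => e ⊆ B) with h𝓕
  have hF3 : ∀ F ∈ 𝓕, F ∈ lv p T 3 ∧ e ⊆ F := fun F hF => Finset.mem_filter.1 hF
  have hex : ∀ F ∈ 𝓕, ∃ e' ∈ lv p T 2, e' ⊆ F ∧ v ⊆ e' ∧ e' ≠ e := by
    intro F hF
    obtain ⟨hF, heF⟩ := hF3 F hF
    have hFT := (mem_lv.1 hF).1
    have hvF : v ∈ lv p F 1 := (mem_lv_sub hFT).2 ⟨hv, hve.trans heF⟩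
    have h2 := atoms_lv hvF (mem_lv.1 hF).2
    obtain ⟨e', he', hne⟩ := Finset.exists_mem_ne
      (by omega : 1 < ((lv p F (1 + 1)).filter (fun B => v ⊆ B)).card) e
    rw [Finset.mem_filter, mem_lv_sub hFT] at he'
    exact ⟨e', he'.1.1, he'.1.2, he'.2, hne⟩
  choose! φ hφ1 hφ2 hφ3 hφ4 using hex
  have hne : 𝓕.Nonempty := by
    rw [← Finset.card_pos]; omega
  obtain ⟨F0, hF0⟩ := hne
  have heg : e ∈ goodE p T S v := by
    refine Finset.mem_filter.2 ⟨Finset.mem_filter.2 ⟨he, hve⟩, F0, (hF3 F0 hF0).1, ?_,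
      (hF3 F0 hF0).2⟩
    exact ⟨u, hu, hue.trans (hF3 F0 hF0).2⟩
  refine ⟨?_, F0, hF3 F0 hF0⟩
  have h2 : 𝓕.card ≤ ((goodE p T S v).erase e).card := by
    apply Finset.card_le_card_of_injOn φ
    · intro F hF
      have h := hF3 F hF
      refine Finset.mem_coe.2 (Finset.mem_erase.2 ⟨hφ4 F hF, Finset.mem_filter.2
        ⟨Finset.mem_filter.2 ⟨hφ1 F hF, hφ3 F hF⟩, F, h.1, ⟨u, hu, hue.trans h.2⟩, hφ2 F hF⟩⟩)
    · intro F hF F' hF' heq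
      have h := hF3 F hF
      have h' := hF3 F' hF'
      obtain ⟨x, hx, hxe⟩ := lv_exists_notMem (hφ1 F hF) he (hφ4 F hF)
      refine eq_of_common (mem_lv.1 h.1).1 (mem_lv.1 h'.1).1 (mem_lv.1 he).1 ?_ ?_ h.2 h'.2
        (hφ2 F hF hx) (hφ2 F' hF' (heq ▸ hx)) hxe
      · rw [(mem_lv.1 h.1).2, (mem_lv.1 he).2]
      · rw [(mem_lv.1 h'.1).2, (mem_lv.1 he).2]
  rw [Finset.card_erase_of_mem heg] at h2
  have : 0 < (goodE p T S v).card := Finset.card_pos.2 ⟨e, heg⟩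
  omega

theorem main_count {T : Finset ι} (hT : Fc p T ∅) {d : ℕ} (hr : crk p T = d + 1) (hd : 2 ≤ d) :
    ((lv p T 1).card : ℤ) ≤ d + 1 + ∑ v ∈ lv p T 1, (((degv p T v).card : ℤ) - d) +
      ∑ F ∈ lv p T 3, (((lv p F 1).card : ℤ) - 3) := by
  let good : Finset (Finset ι) → Prop := fun S => S.Nonempty ∧
    ((satX p T S).card : ℤ) ≤ d + 1 + ∑ v ∈ S, (((degv p T v).card : ℤ) - d) +
      ∑ F ∈ (lv p T 3).filter (fun F => ∃ u ∈ S, u ⊆ F), (((lv p F 1).card : ℤ) - 3)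
  have hsplit : ∀ (S : Finset (Finset ι)) (v : Finset ι),
      ∑ F ∈ (lv p T 3).filter (fun F => ∃ u ∈ insert v S, u ⊆ F), (((lv p F 1).card : ℤ) - 3) =
      ∑ F ∈ (lv p T 3).filter (fun F => ∃ u ∈ S, u ⊆ F), (((lv p F 1).card : ℤ) - 3) +
      ∑ F ∈ (lv p T 3).filter (fun F => v ⊆ F ∧ ¬ ∃ u ∈ S, u ⊆ F),
        (((lv p F 1).card : ℤ) - 3) := by
    intro S v
    rw [← Finset.sum_union]
    · congr 1
      ext F
      simp only [Finset.mem_filter, Finset.mem_union, Finset.mem_insert, exists_eq_or_imp]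
      by_cases h : ∃ a ∈ S, a ⊆ F
      · simp only [h]; tauto
      · simp only [h]; tauto
    · rw [Finset.disjoint_left]
      intro F h1 h2
      exact (Finset.mem_filter.1 h2).2.2 (Finset.mem_filter.1 h1).2
  have hdeg : ∀ v ∈ lv p T 1, d ≤ (degv p T v).card := by
    intro v hv
    have : d + 1 ≤ 1 + (degv p T v).card := atoms_lv hv hr
    omega
  have hbase : ∃ S ∈ (lv p T 1).powerset, good S := by
    have h0 : ∅ ∈ lv p T 0 := by rw [lv_zero hT]; simp
    have h1 := atoms_lv h0 hr
    obtain ⟨v, hv⟩ := Finset.card_pos.1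
      (by omega : 0 < ((lv p T (0 + 1)).filter (fun B => ∅ ⊆ B)).card)
    have hv : v ∈ lv p T 1 := (Finset.mem_filter.1 hv).1
    refine ⟨insert v ∅, by simpa using hv, ⟨v, by simp⟩, ?_⟩
    have h2 := satX_step hT (S := ∅) hv
    have h3 : satX p T ∅ = ∅ := by simp [satX]
    have h4 : goodE p T ∅ v = ∅ := by simp [goodE]
    rw [hsplit, Finset.sum_insert (by simp)]
    rw [h3, h4] at h2
    simp only [Finset.card_insert_of_notMem (Finset.notMem_empty v), Finset.card_empty] at h2
    simp only [Finset.sum_empty]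
    have h5 : (lv p T 3).filter (fun F => ∃ u ∈ (∅ : Finset (Finset ι)), u ⊆ F) = ∅ := by simp
    rw [h5, Finset.sum_empty]
    push_cast at h2
    linarith
  have hbase' : ((lv p T 1).powerset.filter good).Nonempty := by
    obtain ⟨S, h1, h2⟩ := hbase
    exact ⟨S, Finset.mem_filter.2 ⟨h1, h2⟩⟩
  obtain ⟨S, hS, hmax⟩ := Finset.exists_max_image _ Finset.card hbase'
  rw [Finset.mem_filter, Finset.mem_powerset] at hS
  obtain ⟨hS, hSne, hSc⟩ := hS
  have hall : S = lv p T 1 := by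
    by_contra hne
    obtain ⟨w, hw, hwS⟩ := Finset.exists_of_ssubset (Finset.ssubset_iff_subset_ne.2 ⟨hS, hne⟩)
    obtain ⟨u, hu, v, hv, hvS, e, he, hue, hve⟩ := connected hT hS hSne hw hwS
    obtain ⟨hg, F, hF, heF⟩ := good_count hr hd hu hv he hue hve
    have hvX : v ∈ satX p T S :=
      Finset.mem_filter.2 ⟨hv, F, hF, ⟨u, hu, hue.trans heF⟩, hve.trans heF⟩
    have hgood : good (insert v S) := by
      refine ⟨⟨v, by simp⟩, ?_⟩
      have h2 := satX_step hT (S := S) hv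
      rw [hsplit, Finset.sum_insert hvS]
      rw [Finset.insert_eq_of_mem hvX] at h2
      have : (d : ℤ) ≤ (goodE p T S v).card := by exact_mod_cast hg
      linarith
    have := hmax (insert v S) (Finset.mem_filter.2 ⟨Finset.mem_powerset.2
      (Finset.insert_subset hv hS), hgood⟩)
    rw [Finset.card_insert_of_notMem hvS] at this
    omega
  have hF : ∀ v ∈ lv p T 1, ∃ F ∈ lv p T 3, v ⊆ F := by
    intro v hv
    have h1 := hdeg v hv
    obtain ⟨e, he⟩ := Finset.card_pos.1 (by omega : 0 < (degv p T v).card)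
    obtain ⟨he, hve⟩ := Finset.mem_filter.1 he
    obtain ⟨_, F, hF, heF⟩ := good_count (S := {v}) (u := v) hr hd (by simp) hv he hve hve
    exact ⟨F, hF, hve.trans heF⟩
  have hX : satX p T S = lv p T 1 := by
    apply Finset.filter_true_of_mem
    intro v hv
    obtain ⟨F, hF, hvF⟩ := hF v hv
    exact ⟨F, hF, ⟨v, hall ▸ hv, hvF⟩, hvF⟩
  have hF3 : (lv p T 3).filter (fun F => ∃ u ∈ S, u ⊆ F) = lv p T 3 := by
    apply Finset.filter_true_of_mem
    intro F hF
    have hFT := (mem_lv.1 hF).1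
    have h0 : ∅ ∈ lv p F 0 := by
      rw [lv_zero (hT.restrict hFT.subset (Finset.empty_subset _))]; simp
    have h1 := atoms_lv h0 (mem_lv.1 hF).2
    obtain ⟨v, hv⟩ := Finset.card_pos.1
      (by omega : 0 < ((lv p F (0 + 1)).filter (fun B => ∅ ⊆ B)).card)
    have hv := (Finset.mem_filter.1 hv).1
    rw [mem_lv_sub hFT] at hv
    exact ⟨v, hall ▸ hv.1, hv.2⟩
  rw [hX, hF3, hall] at hSc
  exact hSc

theorem deg_sum {T : Finset ι} (hT : Fc p T ∅) :
    ∑ v ∈ lv p T 1, (degv p T v).card = 2 * (lv p T 2).card := by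
  have h := Finset.sum_card_bipartiteAbove_eq_sum_card_bipartiteBelow
    (s := lv p T 1) (t := lv p T 2) (fun v e => v ⊆ e)
  have h1 : ∀ e ∈ lv p T 2, ((lv p T 1).bipartiteBelow (fun v e => v ⊆ e) e).card = 2 := by
    intro e he
    have heT := (mem_lv.1 he).1
    rw [← two_verts (hT.restrict heT.subset (Finset.empty_subset _)) (mem_lv.1 he).2]
    congr 1
    ext v
    rw [mem_lv_sub heT, Finset.bipartiteBelow, Finset.mem_filter]
  rw [Finset.sum_congr rfl h1] at h
  simp only [Finset.sum_const, smul_eq_mul] at h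
  rw [mul_comm, ← h]
  rfl

theorem deg_ge {T : Finset ι} {d : ℕ} (hr : crk p T = d + 1) :
    ∀ v ∈ lv p T 1, d ≤ (degv p T v).card := by
  intro v hv
  have : d + 1 ≤ 1 + (degv p T v).card := atoms_lv hv hr
  omega

theorem vert_ge {T : Finset ι} (hT : Fc p T ∅) : crk p T ≤ (lv p T 1).card := by
  have h0 : ∅ ∈ lv p T 0 := by rw [lv_zero hT]; simp
  have h1 := atoms_lv h0 rfl
  simpa using h1

end Count

section Toric

variable {ι W : Type*} [AddCommGroup W] [Module ℝ W] {p : ι → W}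

noncomputable def gD (p : ι → W) (g : Finset ι → ℚ[X]) (A : Finset ι) : ℚ[X] :=
  ∑ B ∈ (cfaces p A).erase A, g B * (X - 1) ^ (crk p A - crk p B)

theorem reflect_sum' {α : Type*} (s : Finset α) (f : α → ℚ[X]) (N : ℕ) :
    reflect N (∑ i ∈ s, f i) = ∑ i ∈ s, reflect N (f i) := by
  ext k
  simp [coeff_reflect, finset_sum_coeff]

theorem natDegree_Xsub (k : ℕ) : ((X - 1 : ℚ[X]) ^ k).natDegree ≤ k := by
  have h := natDegree_pow_X_add_C (R := ℚ) k (-1)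
  have e : (X - 1 : ℚ[X]) = X + C (-1) := by simp [sub_eq_add_neg]
  rw [e, h]

theorem reflect_Xsub (k : ℕ) : reflect k ((X - 1 : ℚ[X]) ^ k) = (1 - X) ^ k := by
  induction k with
  | zero => simp
  | succ k ih =>
    have h1 : (X - 1 : ℚ[X]).natDegree ≤ 1 := by simpa using natDegree_Xsub 1
    rw [pow_succ, reflect_mul _ _ (natDegree_Xsub k) h1, ih, pow_succ]
    congr 1
    ext j
    have e : reflect 1 (X : ℚ[X]) = 1 := by
      simpa using reflect_monomial (R := ℚ) 1 1
    have e2 : reflect 1 (1 : ℚ[X]) = X := by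
      simp
    rw [reflect_sub, e, e2]

theorem toric_K {T : Finset ι} (hT : Fc p T ∅) (g : Finset ι → ℚ[X]) (hg0 : g ∅ = 1)
    (hg1 : ∀ A, Fc p T A → A ≠ ∅ → ∀ k, (g A).coeff k =
      if 2 * k < crk p A then -(gD p g A).coeff k else 0) :
    ∀ (n : ℕ) (A : Finset ι), A.card ≤ n → Fc p T A →
      (A ≠ ∅ → reflect (crk p A) (gD p g A) = - gD p g A) ∧
      reflect (crk p A) (g A) = g A + gD p g A := by
  have hdeg : ∀ A, Fc p T A → (g A).natDegree ≤ crk p A := by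
    intro A hA
    by_cases h : A = ∅
    · rw [h, hg0]; simp
    · rw [natDegree_le_iff_coeff_eq_zero]
      intro k hk
      rw [hg1 A hA h, if_neg (by omega)]
  intro n
  induction n using Nat.strong_induction_on with
  | _ n ih =>
  intro A hn hA
  by_cases hA0 : A = ∅
  · subst hA0
    have : (cfaces p (∅ : Finset ι)).erase ∅ = ∅ := by
      ext B
      simp only [Finset.mem_erase, mem_cfaces, Finset.notMem_empty, iff_false]
      rintro ⟨h1, h2⟩
      exact h1 (Finset.subset_empty.1 h2.subset)
    simp [gD, this, hg0, crk_empty]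
  · have hfl : ∀ B ∈ (cfaces p A).erase A, Fc p A B ∧ Fc p T B ∧ B.card < A.card ∧
        crk p B < crk p A := by
      intro B hB
      rw [Finset.mem_erase, mem_cfaces] at hB
      have hs := Finset.ssubset_iff_subset_ne.2 ⟨hB.2.subset, hB.1⟩
      exact ⟨hB.2, hA.trans hB.2, Finset.card_lt_card hs, hB.2.crk_lt subset_rfl hs⟩
    have hrefl : reflect (crk p A) (gD p g A) = - gD p g A := by
      have e1 : reflect (crk p A) (gD p g A) = ∑ B ∈ (cfaces p A).erase A,
          ∑ C ∈ cfaces p B, g C * (X - 1) ^ (crk p A - crk p C) * (-1) ^ (crk p A - crk p B) := by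
        unfold gD
        rw [reflect_sum']
        refine Finset.sum_congr rfl fun B hB => ?_
        obtain ⟨h1, h2, h3, h4⟩ := hfl B hB
        have e2 : crk p A = crk p B + (crk p A - crk p B) := by omega
        have e3 : reflect (crk p A) (g B * (X - 1) ^ (crk p A - crk p B)) =
            reflect (crk p B) (g B) * reflect (crk p A - crk p B)
              ((X - 1) ^ (crk p A - crk p B)) := by
          rw [← reflect_mul _ _ (hdeg B h2) (natDegree_Xsub _), ← e2]
        rw [e3, reflect_Xsub, (ih (B.card) (by omega) B le_rfl h2).2]
        have e4 : g B + gD p g B = ∑ C ∈ cfaces p B, g C * (X - 1) ^ (crk p B - crk p C) := by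
          rw [gD, ← Finset.add_sum_erase (cfaces p B) _ (mem_cfaces.2 (Fc.refl B))]
          simp
        rw [e4, Finset.sum_mul]
        refine Finset.sum_congr rfl fun C hC => ?_
        have h5 := crk_mono (p := p) (mem_cfaces.1 hC).subset
        have e5 : crk p A - crk p C = (crk p B - crk p C) + (crk p A - crk p B) := by omega
        rw [e5, pow_add, show (1 - X : ℚ[X]) = (X - 1) * (-1) by ring, mul_pow]
        ring
      have e6 : ∀ B ∈ (cfaces p A).erase A, ∀ C, (C ∈ cfaces p B) ↔
          (C ∈ ((cfaces p A).erase A).filter (fun C => C ⊆ B)) := by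
        intro B hB C
        obtain ⟨h1, h2, h3, h4⟩ := hfl B hB
        simp only [Finset.mem_filter, Finset.mem_erase, mem_cfaces]
        constructor
        · intro hC
          refine ⟨⟨?_, h1.trans hC⟩, hC.subset⟩
          rintro rfl
          have := Finset.card_le_card hC.subset
          omega
        · rintro ⟨⟨_, hC⟩, hCB⟩
          exact hC.restrict h1.subset hCB
      rw [e1]
      have e7 : ∀ B ∈ (cfaces p A).erase A,
          ∑ C ∈ cfaces p B, g C * (X - 1) ^ (crk p A - crk p C) * (-1) ^ (crk p A - crk p B) =
          ∑ C ∈ (cfaces p A).erase A, if C ⊆ B then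
            g C * (X - 1) ^ (crk p A - crk p C) * (-1) ^ (crk p A - crk p B) else 0 := by
        intro B hB
        rw [← Finset.sum_filter]
        exact Finset.sum_congr (Finset.ext (e6 B hB)) fun _ _ => rfl
      rw [Finset.sum_congr rfl e7, Finset.sum_comm, gD, ← Finset.sum_neg_distrib]
      refine Finset.sum_congr rfl fun C hC => ?_
      obtain ⟨h1, h2, h3, h4⟩ := hfl C hC
      have heu := euler_cfaces h1 (Finset.mem_erase.1 hC).1
      have hAm : A ∈ (cfaces p A).filter (fun B => C ⊆ B) :=
        Finset.mem_filter.2 ⟨mem_cfaces.2 (Fc.refl A), h1.subset⟩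
      rw [← Finset.add_sum_erase _ _ hAm] at heu
      have e8 : ((cfaces p A).filter (fun B => C ⊆ B)).erase A =
          ((cfaces p A).erase A).filter (fun B => C ⊆ B) := by
        ext B; simp only [Finset.mem_filter, Finset.mem_erase]; tauto
      rw [e8] at heu
      rw [← Finset.sum_filter, ← Finset.mul_sum]
      have e9 : ∑ B ∈ ((cfaces p A).erase A).filter (fun B => C ⊆ B),
          (-1 : ℚ[X]) ^ (crk p A - crk p B) = -1 := by
        have e10 : ∑ B ∈ ((cfaces p A).erase A).filter (fun B => C ⊆ B),
            (-1 : ℚ[X]) ^ (crk p A - crk p B) = (-1) ^ crk p A *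
            ∑ B ∈ ((cfaces p A).erase A).filter (fun B => C ⊆ B), (-1 : ℚ[X]) ^ (crk p B) := by
          rw [Finset.mul_sum]
          refine Finset.sum_congr rfl fun B hB => ?_
          have h5 := (hfl B (Finset.mem_filter.1 hB).1).2.2.2
          rw [← pow_add, show crk p A + crk p B = (crk p A - crk p B) + 2 * crk p B by omega,
            pow_add, pow_mul]
          simp
        have e11 : (∑ B ∈ ((cfaces p A).erase A).filter (fun B => C ⊆ B),
            (-1 : ℚ[X]) ^ (crk p B)) = - (-1) ^ crk p A := by
          have := congrArg (Int.cast : ℤ → ℚ[X]) heu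
          push_cast at this
          linear_combination this
        rw [e10, e11, mul_neg, ← pow_add, ← two_mul, pow_mul]
        simp
      rw [e9]; ring
    refine ⟨fun _ => hrefl, ?_⟩
    have hrefl' : ∀ k, (gD p g A).coeff (revAt (crk p A) k) = - (gD p g A).coeff k := by
      intro k
      rw [← coeff_reflect, hrefl, coeff_neg]
    ext k
    rw [coeff_reflect, coeff_add, hg1 A hA hA0, hg1 A hA hA0]
    have hk := hrefl' k
    by_cases hkr : k ≤ crk p A
    · rw [revAt_le hkr] at hk ⊢
      by_cases h1 : 2 * k < crk p A
      · rw [if_pos h1, if_neg (by omega)]; ring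
      · rw [if_neg h1]
        by_cases h2 : 2 * (crk p A - k) < crk p A
        · rw [if_pos h2, hk]; ring
        · rw [if_neg h2]
          have : crk p A - k = k := by omega
          rw [this] at hk
          linarith
    · rw [revAt_eq_self_of_lt (by omega)] at hk ⊢
      rw [if_neg (by omega)]
      linarith

end Toric

section ToricCoeff

variable {ι W : Type*} [AddCommGroup W] [Module ℝ W] {p : ι → W}

theorem coeff_Xsub (n k : ℕ) : ((X - 1 : ℚ[X]) ^ n).coeff k = (-1) ^ (n - k) * (n.choose k : ℚ) := by
  have e : (X - 1 : ℚ[X]) = X + C (-1) := by simp [sub_eq_add_neg]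
  rw [e, coeff_X_add_C_pow]

theorem crk_pos {T A : Finset ι} (hT : Fc p T ∅) (hA : Fc p T A) (h : A ≠ ∅) : 1 ≤ crk p A := by
  by_contra h0
  have : A ∈ lv p T 0 := mem_lv.2 ⟨hA, by omega⟩
  rw [lv_zero hT] at this
  exact h (by simpa using this)

structure GH (p : ι → W) (T : Finset ι) (g : Finset ι → ℚ[X]) : Prop where
  hT : Fc p T ∅
  hg0 : g ∅ = 1
  hg1 : ∀ A, Fc p T A → A ≠ ∅ → ∀ k, (g A).coeff k =
      if 2 * k < crk p A then -(gD p g A).coeff k else 0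

variable {T : Finset ι} {g : Finset ι → ℚ[X]}

theorem GH.top (H : GH p T g) {A : Finset ι} (hA : Fc p T A) (h0 : A ≠ ∅) {k : ℕ}
    (hk : 2 * k < crk p A) : (g A).coeff k = (gD p g A).coeff (crk p A - k) := by
  have h := (toric_K H.hT g H.hg0 H.hg1 _ A le_rfl hA).1 h0
  have h2 := congrArg (fun q => coeff q k) h
  simp only [coeff_reflect, coeff_neg] at h2
  rw [revAt_le (by omega)] at h2
  rw [H.hg1 A hA h0, if_pos hk, h2]

theorem GH.deg (H : GH p T g) {A : Finset ι} (hA : Fc p T A) :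
    (g A).natDegree ≤ (crk p A - 1) / 2 := by
  by_cases h : A = ∅
  · subst h; simp [H.hg0]
  · have := crk_pos H.hT hA h
    rw [natDegree_le_iff_coeff_eq_zero]
    intro k hk
    rw [H.hg1 A hA h, if_neg (by omega)]

theorem GH.term_zero (H : GH p T g) {A : Finset ι} (hA : Fc p T A) {n k : ℕ}
    (h : (crk p A - 1) / 2 + n < k) : (g A * (X - 1) ^ n).coeff k = 0 := by
  apply coeff_eq_zero_of_natDegree_lt
  have h1 := H.deg hA
  have h2 := natDegree_Xsub n
  have h3 := natDegree_mul_le (p := g A) (q := (X - 1) ^ n)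
  omega

theorem GH.g_zero (H : GH p T g) {A : Finset ι} (hA : Fc p T A) : (g A).coeff 0 = 1 := by
  by_cases h : A = ∅
  · subst h; simp [H.hg0]
  · have hp := crk_pos H.hT hA h
    rw [H.top hA h (by omega), gD, finsetSum_coeff, Finset.sum_eq_single ∅]
    · simp [H.hg0, crk_empty, coeff_Xsub]
    · intro B hB hB0
      rw [Finset.mem_erase, mem_cfaces] at hB
      have hs := Finset.ssubset_iff_subset_ne.2 ⟨hB.2.subset, hB.1⟩
      have hl := hB.2.crk_lt subset_rfl hs
      have := crk_pos H.hT (hA.trans hB.2) hB0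
      exact H.term_zero (hA.trans hB.2) (by omega)
    · intro hn
      exact absurd (Finset.mem_erase.2 ⟨Ne.symm h, mem_cfaces.2
        (H.hT.restrict hA.subset (by simp))⟩) hn

theorem GH.g_const (H : GH p T g) {A : Finset ι} (hA : Fc p T A) (hr : crk p A ≤ 2) : g A = 1 := by
  have := H.deg hA
  rw [eq_C_of_natDegree_eq_zero (p := g A) (by omega), H.g_zero hA]
  simp

theorem sum_lv {A : Finset ι} (k : ℕ) (hk : k < crk p A) (f : Finset ι → ℚ) :
    ∑ B ∈ (cfaces p A).erase A, (if crk p B = k then f B else 0) = ∑ B ∈ lv p A k, f B := by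
  rw [← Finset.sum_filter]
  congr 1
  ext B
  simp only [Finset.mem_filter, Finset.mem_erase, lv]
  constructor
  · tauto
  · rintro ⟨h1, h2⟩
    refine ⟨⟨?_, h1⟩, h2⟩
    rintro rfl
    omega

theorem GH.g_one (H : GH p T g) {A : Finset ι} (hA : Fc p T A) (hr : crk p A = 3) :
    (g A).coeff 1 = ((lv p A 1).card : ℚ) - 3 := by
  have h : A ≠ ∅ := by rintro rfl; simp [crk_empty] at hr
  have hA0 : Fc p A ∅ := H.hT.restrict hA.subset (by simp)
  rw [H.top hA h (by omega), gD, finsetSum_coeff]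
  have e : ∀ B ∈ (cfaces p A).erase A, (g B * (X - 1) ^ (crk p A - crk p B)).coeff (crk p A - 1) =
      (if crk p B = 0 then (-3 : ℚ) else 0) + (if crk p B = 1 then (1 : ℚ) else 0) := by
    intro B hB
    rw [Finset.mem_erase, mem_cfaces] at hB
    have hs := Finset.ssubset_iff_subset_ne.2 ⟨hB.2.subset, hB.1⟩
    have hl := hB.2.crk_lt subset_rfl hs
    rw [H.g_const (hA.trans hB.2) (by omega), one_mul, coeff_Xsub, hr]
    rw [hr] at hl
    generalize crk p B = b at *
    interval_cases b <;> norm_num [Nat.choose]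
  rw [Finset.sum_congr rfl e, Finset.sum_add_distrib, sum_lv 0 (by omega), sum_lv 1 (by omega),
    lv_zero hA0]
  simp
  ring

theorem GH.g_two (H : GH p T g) {A : Finset ι} (hA : Fc p T A) (hr : 5 ≤ crk p A) :
    (g A).coeff 2 = (crk p A : ℚ) * (crk p A - 1) / 2 - (crk p A - 1) * (lv p A 1).card
      + (lv p A 2).card + ∑ F ∈ lv p A 3, (((lv p F 1).card : ℚ) - 3) := by
  have h : A ≠ ∅ := by rintro rfl; simp [crk_empty] at hr
  have hA0 : Fc p A ∅ := H.hT.restrict hA.subset (by simp)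
  rw [H.top hA h (by omega), gD, finsetSum_coeff]
  have e : ∀ B ∈ (cfaces p A).erase A, (g B * (X - 1) ^ (crk p A - crk p B)).coeff (crk p A - 2) =
      (if crk p B = 0 then (crk p A : ℚ) * (crk p A - 1) / 2 else 0) +
      (if crk p B = 1 then -((crk p A : ℚ) - 1) else 0) +
      (if crk p B = 2 then (1 : ℚ) else 0) +
      (if crk p B = 3 then (((lv p B 1).card : ℚ) - 3) else 0) := by
    intro B hB
    rw [Finset.mem_erase, mem_cfaces] at hB
    have hs := Finset.ssubset_iff_subset_ne.2 ⟨hB.2.subset, hB.1⟩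
    have hl := hB.2.crk_lt subset_rfl hs
    have hB' := hA.trans hB.2
    obtain ⟨m, hm⟩ : ∃ m, crk p A = m + 5 := ⟨crk p A - 5, by omega⟩
    rcases lt_or_ge (crk p B) 3 with h3 | h3
    · rw [H.g_const hB' (by omega), one_mul, coeff_Xsub, hm]
      rw [hm] at hl
      generalize crk p B = b at *
      interval_cases b
      · have : (m + 5 - 0).choose (m + 5 - 2) = (m+5).choose 2 := by
          rw [← Nat.choose_symm (by omega : 2 ≤ m + 5)]; rfl
        rw [this, Nat.cast_choose_two, show m + 5 - 0 - (m + 5 - 2) = 2 by omega]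
        simp
      · have : (m + 5 - 1).choose (m + 5 - 2) = m + 4 := by
          rw [show m + 5 - 1 = (m + 3) + 1 by omega, show m + 5 - 2 = m + 3 by omega,
            Nat.choose_succ_self_right]
        rw [this, show m + 5 - 1 - (m + 5 - 2) = 1 by omega]
        simp; ring
      · simp
    · rcases h3.eq_or_lt with h3 | h3
      · rw [← H.g_one hB' h3.symm, ← h3]
        have hd := H.deg hB'
        have eg : g B = C ((g B).coeff 1) * X + 1 := by
          have := eq_X_add_C_of_natDegree_le_one (p := g B) (by omega)
          rw [H.g_zero hB'] at this
          simpa using this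
        rw [eg]
        have e1 : crk p A - 2 = (m + 2) + 1 := by omega
        have e2 : crk p A - 3 = m + 2 := by omega
        rw [e1, e2, add_mul, mul_assoc, coeff_add, coeff_C_mul, coeff_X_mul, one_mul,
          coeff_Xsub, coeff_Xsub]
        simp [coeff_one]
      · rw [H.term_zero hB' (by omega)]
        rw [if_neg (by omega), if_neg (by omega), if_neg (by omega), if_neg (by omega)]
        simp
  rw [Finset.sum_congr rfl e, Finset.sum_add_distrib, Finset.sum_add_distrib,
    Finset.sum_add_distrib, sum_lv 0 (by omega), sum_lv 1 (by omega),
    sum_lv 2 (by omega), sum_lv 3 (by omega) (fun B => ((lv p B 1).card : ℚ) - 3),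
    lv_zero hA0]
  simp
  ring

theorem GH.final (H : GH p T g) {d : ℕ} (hd : 2 ≤ d) (hr : crk p T = d + 1) :
    ((d : ℚ) + 1) * ((d : ℚ) - 2) / 2 ≤
      (g T).coeff 2 + ((lv p T 2).card : ℚ) - ((lv p T 1).card : ℚ) := by
  have hds := deg_sum H.hT
  have hv := vert_ge H.hT
  rcases lt_or_ge d 4 with h4 | h4
  · have hT0 : T ≠ ∅ := by rintro rfl; simp [crk_empty] at hr
    rw [H.hg1 T (Fc.refl T) hT0 2, if_neg (by omega)]
    have h1 : (lv p T 1).card * d ≤ 2 * (lv p T 2).card := by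
      rw [← hds, ← smul_eq_mul]
      exact Finset.card_nsmul_le_sum _ _ _ (deg_ge hr)
    rw [hr] at hv
    have h1' : ((lv p T 1).card : ℚ) * d ≤ 2 * (lv p T 2).card := by exact_mod_cast h1
    have hv' : (d : ℚ) + 1 ≤ (lv p T 1).card := by exact_mod_cast hv
    have : (0 : ℚ) ≤ d - 2 := by
      have : (2 : ℚ) ≤ d := by exact_mod_cast hd
      linarith
    nlinarith
  · rw [H.g_two (Fc.refl T) (by omega), hr]
    have hm := main_count H.hT hr hd
    rw [Finset.sum_sub_distrib] at hm
    have e : ∑ v ∈ lv p T 1, ((degv p T v).card : ℤ) = 2 * (lv p T 2).card := by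
      exact_mod_cast hds
    rw [e] at hm
    simp only [Finset.sum_const, nsmul_eq_mul] at hm
    have hm' : ((lv p T 1).card : ℚ) ≤ d + 1 + (2 * (lv p T 2).card - (lv p T 1).card * d) +
      ∑ F ∈ lv p T 3, (((lv p F 1).card : ℚ) - 3) := by exact_mod_cast hm
    push_cast
    nlinarith

end ToricCoeff

section Transfer

variable {V : Type*} [AddCommGroup V] [Module ℝ V]

def hp (s : V) : V × ℝ := (s, (1 : ℝ))

def cv (A : Finset V) : Set V := convexHull ℝ (A : Set V)

theorem cv_empty : cv (∅ : Finset V) = ∅ := by simp [cv]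

theorem cv_eq_empty {A : Finset V} : cv A = ∅ ↔ A = ∅ := by
  simp [cv]

theorem mem_cv {A : Finset V} {s : V} (h : s ∈ A) : s ∈ cv A :=
  subset_convexHull ℝ _ h

theorem cv_mono {A B : Finset V} (h : A ⊆ B) : cv A ⊆ cv B :=
  convexHull_mono (by exact_mod_cast h)

theorem cv_le {A : Finset V} (l : V →ₗ[ℝ] ℝ) {m : ℝ} (h : ∀ s ∈ A, l s ≤ m) {x : V}
    (hx : x ∈ cv A) : l x ≤ m := by
  have : cv A ⊆ {x | l x ≤ m} :=
    convexHull_min (fun s hs => h s hs) (convex_halfSpace_le l.isLinear m)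
  exact this hx

theorem cv_eq {A : Finset V} (l : V →ₗ[ℝ] ℝ) {m : ℝ} (h : ∀ s ∈ A, l s = m) {x : V}
    (hx : x ∈ cv A) : l x = m := by
  have : cv A ⊆ {x | l x = m} :=
    convexHull_min (fun s hs => h s hs) (convex_hyperplane l.isLinear m)
  exact this hx

theorem cv_level {A : Finset V} (l : V →ₗ[ℝ] ℝ) {m : ℝ} (h : ∀ s ∈ A, l s ≤ m) :
    {x | x ∈ cv A ∧ l x = m} = cv (A.filter (fun s => l s = m)) := by
  ext x
  constructor
  · rintro ⟨hx, hm⟩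
    rw [cv, Finset.mem_convexHull'] at hx
    obtain ⟨w, h0, h1, hw⟩ := hx
    have hz : ∑ y ∈ A, w y * (m - l y) = 0 := by
      have : l x = ∑ y ∈ A, w y * l y := by rw [← hw]; simp
      simp only [mul_sub, Finset.sum_sub_distrib, ← Finset.sum_mul, h1]
      rw [← this, hm]; ring
    have hz' := (Finset.sum_eq_zero_iff_of_nonneg (fun y hy =>
      mul_nonneg (h0 y hy) (sub_nonneg.2 (h y hy)))).1 hz
    have hw0 : ∀ y ∈ A, l y ≠ m → w y = 0 := by
      intro y hy hne
      rcases mul_eq_zero.1 (hz' y hy) with h | h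
      · exact h
      · exact absurd (by linarith) hne
    rw [cv, Finset.mem_convexHull']
    refine ⟨w, fun y hy => h0 y (Finset.mem_filter.1 hy).1, ?_, ?_⟩
    · rw [← h1, Finset.sum_filter]
      refine Finset.sum_congr rfl fun y hy => ?_
      split_ifs with hh
      · rfl
      · exact (hw0 y hy hh).symm
    · rw [← hw, Finset.sum_filter]
      refine Finset.sum_congr rfl fun y hy => ?_
      split_ifs with hh
      · rfl
      · rw [hw0 y hy hh, zero_smul]
  · intro hx
    exact ⟨cv_mono (Finset.filter_subset _ _) hx,
      cv_eq l (fun s hs => (Finset.mem_filter.1 hs).2) hx⟩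

theorem argmax_level {A : Finset V} (l : V →ₗ[ℝ] ℝ) {m : ℝ} (h : ∀ s ∈ A, l s ≤ m)
    (h' : ∃ s ∈ A, l s = m) :
    {x | x ∈ cv A ∧ ∀ y ∈ cv A, l y ≤ l x} = cv (A.filter (fun s => l s = m)) := by
  rw [← cv_level l h]
  obtain ⟨s, hs, hm⟩ := h'
  ext x
  constructor
  · rintro ⟨hx, h2⟩
    exact ⟨hx, le_antisymm (cv_le l h hx) (hm ▸ h2 s (mem_cv hs))⟩
  · rintro ⟨hx, h2⟩
    exact ⟨hx, fun y hy => h2 ▸ cv_le l h hy⟩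

theorem hp_apply (L : V × ℝ →ₗ[ℝ] ℝ) (s : V) :
    L (hp s) = (L.comp (LinearMap.inl ℝ V ℝ)) s + L (0, 1) := by
  rw [LinearMap.comp_apply, ← map_add]
  simp [hp]

theorem fc_empty (S : Finset V) : Fc hp S ∅ :=
  ⟨LinearMap.snd ℝ V ℝ, by simp [hp], by simp [hp]⟩

theorem isFace_of_fc {A B : Finset V} (h : Fc hp A B) : IsFace (cv A) (cv B) := by
  by_cases hB : B = ∅
  · subst hB
    exact Or.inr (Or.inl cv_empty)
  obtain ⟨L, h1, h2⟩ := h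
  refine Or.inr (Or.inr ⟨-(L.comp (LinearMap.inl ℝ V ℝ)), ?_⟩)
  have e : B = A.filter (fun s => (-(L.comp (LinearMap.inl ℝ V ℝ))) s = L (0, 1)) := by
    ext s
    rw [h2, Finset.mem_filter, hp_apply, LinearMap.neg_apply]
    refine and_congr_right fun _ => ?_
    constructor <;> intro h <;> linarith
  rw [argmax_level (m := L (0, 1)), ← e]
  · intro s hs
    have := h1 s hs
    rw [hp_apply] at this
    rw [LinearMap.neg_apply]
    linarith
  · obtain ⟨s, hs⟩ := Finset.nonempty_iff_ne_empty.2 hB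
    rw [e] at hs
    exact ⟨s, Finset.mem_filter.1 hs⟩

theorem fc_of_isFace {A : Finset V} {F : Set V} (h : IsFace (cv A) F) :
    ∃ B, Fc hp A B ∧ F = cv B := by
  rcases h with h | h | ⟨l, h⟩
  · exact ⟨A, Fc.refl A, h⟩
  · exact ⟨∅, fc_empty A, by rw [h, cv_empty]⟩
  · by_cases hA : A = ∅
    · refine ⟨∅, fc_empty A, ?_⟩
      rw [h, hA, cv_empty]
      simp
    · obtain ⟨s, hs, hm⟩ := Finset.exists_max_image A l (Finset.nonempty_iff_ne_empty.2 hA)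
      refine ⟨A.filter (fun t => l t = l s), ?_, ?_⟩
      · refine ⟨l s • LinearMap.snd ℝ V ℝ - l.comp (LinearMap.fst ℝ V ℝ), ?_, ?_⟩
        · intro t ht
          simpa [hp] using hm t ht
        · intro t
          rw [Finset.mem_filter]
          refine and_congr_right fun _ => ?_
          simp only [hp, LinearMap.sub_apply, LinearMap.smul_apply, LinearMap.snd_apply,
            LinearMap.comp_apply, LinearMap.fst_apply, smul_eq_mul, mul_one]
          constructor <;> intro h <;> linarith
      · rw [h, argmax_level l hm ⟨s, hs, rfl⟩]

theorem mem_of_mem_cv {A B : Finset V} (h : Fc hp A B) {s : V} (hs : s ∈ A) (hB : s ∈ cv B) :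
    s ∈ B := by
  obtain ⟨L, h1, h2⟩ := h
  refine (h2 s).2 ⟨hs, ?_⟩
  rw [hp_apply]
  have := cv_eq (A := B) (L.comp (LinearMap.inl ℝ V ℝ)) (m := - L (0, 1)) (fun t ht => by
    have := ((h2 t).1 ht).2
    rw [hp_apply] at this
    linarith) hB
  rw [this]; ring

theorem cv_inj {A B C : Finset V} (hB : Fc hp A B) (hC : Fc hp A C) (h : cv B = cv C) : B = C := by
  apply Finset.Subset.antisymm
  · exact fun s hs => mem_of_mem_cv hC (hB.subset hs) (h ▸ mem_cv hs)
  · exact fun s hs => mem_of_mem_cv hB (hC.subset hs) (h ▸ mem_cv hs)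

theorem pdim_cv (A : Finset V) : pdim (cv A) = (crk hp A : ℤ) - 1 := by
  by_cases hA : A = ∅
  · subst hA
    simp [pdim, cv_empty, crk_empty]
  rw [pdim, if_neg (by rwa [cv_eq_empty]), cv, affineSpan_convexHull, direction_affineSpan]
  obtain ⟨s, hs⟩ := Finset.nonempty_iff_ne_empty.2 hA
  have hs' : s ∈ (A : Set V) := hs
  have e : Submodule.span ℝ (hp '' (A : Set V)) =
      (vectorSpan ℝ (A : Set V)).map (LinearMap.inl ℝ V ℝ) ⊔ Submodule.span ℝ {hp s} := by
    apply le_antisymm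
    · rw [Submodule.span_le]
      rintro _ ⟨t, ht, rfl⟩
      have : hp t = LinearMap.inl ℝ V ℝ (t - s) + hp s := by simp [hp]
      rw [this]
      exact Submodule.add_mem_sup (Submodule.mem_map_of_mem
        (vsub_mem_vectorSpan ℝ ht hs')) (Submodule.mem_span_singleton_self _)
    · rw [sup_le_iff]
      constructor
      · rw [vectorSpan_eq_span_vsub_set_right ℝ hs', Submodule.map_span_le]
        rintro _ ⟨t, ht, rfl⟩
        have : LinearMap.inl ℝ V ℝ (t -ᵥ s) = hp t - hp s := by simp [hp]
        simp only [this]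
        exact Submodule.sub_mem _ (Submodule.subset_span ⟨t, ht, rfl⟩)
          (Submodule.subset_span ⟨s, hs', rfl⟩)
      · rw [Submodule.span_le, Set.singleton_subset_iff]
        exact Submodule.subset_span ⟨s, hs', rfl⟩
  have hfin : FiniteDimensional ℝ (vectorSpan ℝ (A : Set V)) :=
    finiteDimensional_vectorSpan_of_finite ℝ A.finite_toSet
  have hinf : (vectorSpan ℝ (A : Set V)).map (LinearMap.inl ℝ V ℝ) ⊓
      Submodule.span ℝ {hp s} = ⊥ := by
    rw [Submodule.eq_bot_iff]
    rintro x ⟨⟨v, -, rfl⟩, h2⟩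
    obtain ⟨c, hc⟩ := Submodule.mem_span_singleton.1 h2
    have h3 := congrArg Prod.snd hc
    simp [hp] at h3
    subst h3
    rw [← hc, zero_smul]
  have hsum := Submodule.finrank_sup_add_finrank_inf_eq
    ((vectorSpan ℝ (A : Set V)).map (LinearMap.inl ℝ V ℝ)) (Submodule.span ℝ {hp s})
  rw [hinf, ← e, finrank_bot, finrank_span_singleton (by simp [hp]),
    ← (Submodule.equivMapOfInjective (LinearMap.inl ℝ V ℝ) LinearMap.inl_injective
      (vectorSpan ℝ (A : Set V))).finrank_eq] at hsum
  rw [crk]; omega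

theorem relH_rec {A : Finset V} (hA : A ≠ ∅) (n : ℕ) :
    relHAux (n + 1) ∅ (cv A) = ∑ B ∈ (cfaces hp A).erase A,
      truncG ((crk hp B : ℤ) - 1) (relHAux n ∅ (cv B)) *
        (X - 1) ^ (crk hp A - crk hp B - 1) := by
  rw [relHAux, if_neg (by rwa [cv_eq_empty])]
  have e : {G' : Set V | IsFace (cv A) G' ∧ ∅ ⊆ G' ∧ G' ≠ cv A} =
      (((cfaces hp A).erase A).image cv : Finset (Set V)) := by
    ext F
    simp only [Set.mem_setOf_eq, Finset.coe_image, Set.mem_image, Finset.mem_coe,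
      Finset.mem_erase, mem_cfaces]
    constructor
    · rintro ⟨h1, -, h2⟩
      obtain ⟨B, hB, rfl⟩ := fc_of_isFace h1
      exact ⟨B, ⟨fun h => h2 (by rw [h]), hB⟩, rfl⟩
    · rintro ⟨B, ⟨h1, h2⟩, rfl⟩
      exact ⟨isFace_of_fc h2, Set.empty_subset _, fun h => h1 (cv_inj h2 (Fc.refl A) h)⟩
  rw [e, finsum_mem_coe_finset, Finset.sum_image]
  · refine Finset.sum_congr rfl fun B hB => ?_
    have h0 : pdim (∅ : Set V) = -1 := by simp [pdim]
    rw [pdim_cv, pdim_cv, h0]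
    congr 2
    · congr 1
      ring
    · omega
  · intro B hB C hC h
    simp only [Finset.coe_erase, Set.mem_diff, Finset.mem_coe, mem_cfaces] at hB hC
    exact cv_inj hB.1 hC.1 h

theorem crk_hp_pos {A : Finset V} (hA : A ≠ ∅) : 1 ≤ crk hp A :=
  crk_pos (fc_empty A) (Fc.refl A) hA

theorem relH_empty (n : ℕ) : relHAux n (∅ : Set V) ∅ = 1 := by
  cases n <;> simp [relHAux]

theorem relH_fuel : ∀ (n : ℕ) (A : Finset V), crk hp A ≤ n →
    relHAux n ∅ (cv A) = relHAux (crk hp A) ∅ (cv A) := by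
  intro n
  induction n using Nat.strong_induction_on with
  | _ n ih =>
  intro A hn
  by_cases hA : A = ∅
  · subst hA
    rw [cv_empty, relH_empty, relH_empty]
  have hp1 := crk_hp_pos hA
  obtain ⟨m, hm⟩ : ∃ m, crk hp A = m + 1 := ⟨crk hp A - 1, by omega⟩
  obtain ⟨k, hk⟩ : ∃ k, n = k + 1 := ⟨n - 1, by omega⟩
  rw [hk]
  conv_rhs => rw [hm]
  rw [relH_rec hA, relH_rec hA]
  refine Finset.sum_congr rfl fun B hB => ?_
  rw [Finset.mem_erase, mem_cfaces] at hB
  have hs := Finset.ssubset_iff_subset_ne.2 ⟨hB.2.subset, hB.1⟩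
  have hl := hB.2.crk_lt subset_rfl hs
  rw [ih k (by omega) B (by omega), ih m (by omega) B (by omega)]

noncomputable def gg (A : Finset V) : ℚ[X] :=
  truncG ((crk hp A : ℤ) - 1) (relHAux (crk hp A) ∅ (cv A))

theorem coeff_truncG (d : ℤ) (h : ℚ[X]) (k : ℕ) : (truncG d h).coeff k =
    if k < d.toNat / 2 + 1 then h.coeff k - (if k = 0 then 0 else h.coeff (k - 1)) else 0 := by
  rw [truncG, finsetSum_coeff]
  simp only [coeff_C_mul, coeff_X_pow, mul_ite, mul_one, mul_zero]
  rw [Finset.sum_ite_eq]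
  simp

theorem gg_D {A : Finset V} (hA : A ≠ ∅) :
    gD hp gg A = relHAux (crk hp A) ∅ (cv A) * (X - 1) := by
  have hp1 := crk_hp_pos hA
  obtain ⟨m, hm⟩ : ∃ m, crk hp A = m + 1 := ⟨crk hp A - 1, by omega⟩
  conv_rhs => rw [hm]
  rw [relH_rec hA, gD, Finset.sum_mul]
  refine Finset.sum_congr rfl fun B hB => ?_
  rw [Finset.mem_erase, mem_cfaces] at hB
  have hs := Finset.ssubset_iff_subset_ne.2 ⟨hB.2.subset, hB.1⟩
  have hl := hB.2.crk_lt subset_rfl hs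
  rw [relH_fuel m B (by omega), mul_assoc, ← pow_succ, ← gg]
  congr 2
  omega

theorem gg_GH (S : Finset V) : GH hp S gg where
  hT := fc_empty S
  hg0 := by
    simp [gg, crk_empty, relHAux, truncG]
  hg1 := by
    intro A _ hA k
    have hp1 := crk_hp_pos hA
    rw [gg_D hA, gg, coeff_truncG]
    have e : (k < ((crk hp A : ℤ) - 1).toNat / 2 + 1) ↔ 2 * k < crk hp A := by omega
    simp only [e]
    congr 1
    cases k with
    | zero => simp [mul_sub]
    | succ k => simp [mul_sub, coeff_mul_X]

theorem toricG_cv (S : Finset V) : toricG (cv S) = gg S := by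
  have h0 : pdim (∅ : Set V) = -1 := by simp [pdim]
  rw [toricG, relG, relH, pdim_cv, h0, gg]
  congr 1
  · ring
  · congr 1
    omega

theorem ncard_lv (S : Finset V) (k : ℕ) :
    {F : Set V | IsFace (cv S) F ∧ pdim F = k}.ncard = (lv hp S (k + 1)).card := by
  have e : {F : Set V | IsFace (cv S) F ∧ pdim F = k} =
      ((lv hp S (k + 1)).image cv : Finset (Set V)) := by
    ext F
    simp only [Set.mem_setOf_eq, Finset.coe_image, Set.mem_image, Finset.mem_coe, mem_lv]
    constructor
    · rintro ⟨h1, h2⟩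
      obtain ⟨B, hB, rfl⟩ := fc_of_isFace h1
      rw [pdim_cv] at h2
      exact ⟨B, ⟨hB, by omega⟩, rfl⟩
    · rintro ⟨B, ⟨h1, h2⟩, rfl⟩
      refine ⟨isFace_of_fc h1, ?_⟩
      rw [pdim_cv, h2]
      push_cast; ring
  rw [e, Set.ncard_coe_finset, Finset.card_image_of_injOn]
  intro B hB C hC h
  exact cv_inj (mem_lv.1 hB).1 (mem_lv.1 hC).1 h

end Transfer

/-- For every polytope `P` of dimension `d ≥ 2`,
`g₂(P) + f₁(P) - f₀(P) ≥ (d+1)(d-2)/2`. -/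
theorem g2_f1_f0_inequality {V : Type*} [AddCommGroup V] [Module ℝ V]
    (P : Set V) (hP : IsPolytope P) (d : ℕ) (hd : 2 ≤ d) (hdim : pdim P = (d : ℤ)) :
    ((d : ℚ) + 1) * ((d : ℚ) - 2) / 2 ≤
      (toricG P).coeff 2 + ({F : Set V | IsFace P F ∧ pdim F = 1}.ncard : ℚ) -
        ({F : Set V | IsFace P F ∧ pdim F = 0}.ncard : ℚ) := by
  obtain ⟨S, hS⟩ := hP
  change P = cv S at hS
  subst hS
  have h1 := ncard_lv S 1
  have h0 := ncard_lv S 0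
  have hr : crk hp S = d + 1 := by
    rw [pdim_cv] at hdim
    omega
  have := (gg_GH S).final hd hr
  rw [toricG_cv]
  push_cast at h1 h0
  rw [h1, h0]
  exact this
end

section
/- (Kalai) For every polytope P of dimension d and every integer k with 0 ≤ k ≤ d/2 − 1: (k+1)·g_{k+1}(P) + (d−k+1)·g_k(P) = Σ_{i=0}^{k} (i+1) · Σ_{F} g_i(F)·g_{k−i}(P/F), where the inner sum runs over all faces F of P with dim F = 2i. -/
open Classical Polynomial

set_option linter.unusedSectionVars false


namespace KalaiAux

section Abs
variable {α : Type*} [Fintype α] [PartialOrder α] (ρ : α → ℕ)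

noncomputable def kap : Matrix α α ℚ[X] := fun x y => if x ≤ y then (X - 1) ^ (ρ y - ρ x) else 0
noncomputable def kapb : Matrix α α ℚ[X] := fun x y => if x ≤ y then (1 - X) ^ (ρ y - ρ x) else 0

noncomputable def bar (A : Matrix α α ℚ[X]) : Matrix α α ℚ[X] :=
  fun x y => reflect (ρ y - ρ x) (A x y)

def Adm (A : Matrix α α ℚ[X]) : Prop :=
  ∀ x y, (¬ x ≤ y → A x y = 0) ∧ (A x y).natDegree ≤ ρ y - ρ x

lemma reflect_sum' {ι : Type*} (s : Finset ι) (n : ℕ) (f : ι → ℚ[X]) :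
    reflect n (∑ i ∈ s, f i) = ∑ i ∈ s, reflect n (f i) := by
  induction s using Finset.induction_on with
  | empty => simp
  | insert a s h ih => rw [Finset.sum_insert h, Finset.sum_insert h, reflect_add, ih]

lemma mul_bar_apply (hρ : StrictMono ρ) {A B : Matrix α α ℚ[X]} (hA : Adm ρ A) (hB : Adm ρ B)
    (x z y : α) : reflect (ρ y - ρ x) (A x z * B z y) = bar ρ A x z * bar ρ B z y := by
  unfold bar
  by_cases h1 : x ≤ z
  · by_cases h2 : z ≤ y
    · have e : ρ y - ρ x = (ρ z - ρ x) + (ρ y - ρ z) := by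
        have := hρ.monotone h1; have := hρ.monotone h2; omega
      rw [e, reflect_mul _ _ (hA x z).2 (hB z y).2]
    · simp [(hB z y).1 h2]
  · simp [(hA x z).1 h1]

lemma bar_mul (hρ : StrictMono ρ) {A B : Matrix α α ℚ[X]} (hA : Adm ρ A) (hB : Adm ρ B) :
    bar ρ (A * B) = bar ρ A * bar ρ B := by
  ext1 x y
  rw [Matrix.mul_apply]
  simp only [← mul_bar_apply ρ hρ hA hB]
  rw [← reflect_sum', ← Matrix.mul_apply]; rfl

lemma reflect_zero_one : reflect 0 (1 : ℚ[X]) = 1 := by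
  have := reflect_C (1:ℚ) 0
  simpa using this

lemma natDegree_X_sub_one_pow (n : ℕ) : ((X - 1 : ℚ[X]) ^ n).natDegree ≤ n := by
  have := natDegree_X_sub_C (1:ℚ)
  rw [C_1] at this
  calc _ ≤ n * (X - 1 : ℚ[X]).natDegree := natDegree_pow_le
    _ = n := by rw [this, mul_one]

lemma reflect_X_sub_one_pow (n : ℕ) : reflect n ((X - 1 : ℚ[X]) ^ n) = (1 - X) ^ n := by
  induction n with
  | zero => simpa using reflect_zero_one
  | succ n ih =>
    rw [pow_succ, pow_succ, reflect_mul _ _ (natDegree_X_sub_one_pow n)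
      (by simpa using natDegree_X_sub_one_pow 1), ih]
    congr 1
    rw [reflect_sub, ← C_1, reflect_C]
    have := reflect_C_mul_X_pow 1 1 (c := (1:ℚ))
    simp only [C_1, one_mul, pow_one, revAt_le le_rfl, Nat.sub_self, pow_zero] at this
    rw [this]; simp

lemma adm_kap : Adm ρ (kap ρ) := by
  intro x y
  unfold kap
  constructor
  · intro h; simp [h]
  · split_ifs
    · exact natDegree_X_sub_one_pow _
    · simp

lemma bar_kap : bar ρ (kap ρ) = kapb ρ := by
  ext1 x y
  unfold bar kap kapb
  split_ifs
  · exact reflect_X_sub_one_pow _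
  · simp

lemma kap_mul_kapb (hρ : StrictMono ρ)
    (hE : ∀ x y : α, x < y → ∑ z ∈ Finset.univ.filter (fun z => x ≤ z ∧ z ≤ y), (-1 : ℚ) ^ ρ z = 0) :
    kap ρ * kapb ρ = 1 := by
  ext1 x y
  rw [Matrix.mul_apply]
  have key : ∀ z, kap ρ x z * kapb ρ z y =
      if x ≤ z ∧ z ≤ y then (X - 1) ^ (ρ y - ρ x) * C ((-1 : ℚ) ^ ρ y * (-1) ^ ρ z) else 0 := by
    intro z
    unfold kap kapb
    by_cases h1 : x ≤ z
    · by_cases h2 : z ≤ y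
      · have a1 := hρ.monotone h1
        have a2 := hρ.monotone h2
        have e : ρ y - ρ x = (ρ z - ρ x) + (ρ y - ρ z) := by omega
        have e2 : ((1 - X : ℚ[X])) = (X - 1) * C (-1) := by simp
        have e3 : ((-1 : ℚ)) ^ ρ y = (-1) ^ (ρ y - ρ z) * (-1) ^ ρ z := by
          rw [← pow_add]; congr 1; omega
        simp only [h1, h2, if_true, and_self]
        rw [e, pow_add, e2, mul_pow (X-1), ← C_pow, e3]
        rw [mul_assoc ((-1 : ℚ) ^ _), ← mul_pow]
        simp only [mul_neg, mul_one, neg_neg, one_pow]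
        ring
      · simp [h2]
    · simp [h1]
  simp only [key]
  rw [← Finset.sum_filter, ← Finset.mul_sum, ← map_sum, ← Finset.mul_sum]
  by_cases hxy : x = y
  · subst hxy
    have : Finset.univ.filter (fun z => x ≤ z ∧ z ≤ x) = {x} := by
      ext z; simp; constructor
      · rintro ⟨h1, h2⟩; exact le_antisymm h2 h1
      · rintro rfl; simp
    rw [this]; simp [← mul_pow]
  · rw [Matrix.one_apply_ne hxy]
    by_cases h : x ≤ y
    · rw [hE x y (lt_of_le_of_ne h hxy)]; simp
    · have : Finset.univ.filter (fun z => x ≤ z ∧ z ≤ y) = ∅ := by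
        ext z; simp; intro h1 h2; exact h (h1.trans h2)
      rw [this]; simp

structure IsG (g : Matrix α α ℚ[X]) : Prop where
  z : ∀ x y, ¬ x ≤ y → g x y = 0
  o : ∀ x, g x x = 1
  r : ∀ x y, x < y → ∀ k, (g x y).coeff k = if 2 * k < ρ y - ρ x then
    - (∑ z ∈ Finset.univ.filter (fun z => x ≤ z ∧ z < y),
      g x z * (X - 1) ^ (ρ y - ρ z)).coeff k else 0

variable {ρ}

lemma IsG.coeff0 {g : Matrix α α ℚ[X]} (hg : IsG ρ g) {x y : α} (h : x ≠ y) {k : ℕ}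
    (hk : ρ y - ρ x ≤ 2 * k) : (g x y).coeff k = 0 := by
  by_cases h1 : x ≤ y
  · rw [hg.r x y (lt_of_le_of_ne h1 h), if_neg (by omega)]
  · simp [hg.z x y h1]

lemma IsG.adm {g : Matrix α α ℚ[X]} (hg : IsG ρ g) : Adm ρ g := by
  intro x y
  refine ⟨hg.z x y, ?_⟩
  by_cases h : x = y
  · subst h; simp [hg.o]
  · rw [natDegree_le_iff_coeff_eq_zero]
    intro k hk
    exact hg.coeff0 h (by omega)

lemma sum_split (A B : Matrix α α ℚ[X]) (hA : ∀ x y, ¬ x ≤ y → A x y = 0)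
    (hB : ∀ x y, ¬ x ≤ y → B x y = 0) {x y : α} (h : x ≤ y) :
    (A * B) x y = ∑ z ∈ Finset.univ.filter (fun z => x ≤ z ∧ z < y), A x z * B z y
      + A x y * B y y := by
  have : y ∉ Finset.univ.filter (fun z => x ≤ z ∧ z < y) := by simp
  rw [add_comm, ← Finset.sum_insert (f := fun z => A x z * B z y) this, Matrix.mul_apply]
  symm
  apply Finset.sum_subset (Finset.subset_univ _)
  intro z _ hz
  by_cases h1 : x ≤ z
  · by_cases h2 : z ≤ y
    · exfalso; apply hz; simp [h1]
      exact eq_or_lt_of_le h2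
    · simp [hB z y h2]
  · simp [hA x z h1]

lemma kap_self (x : α) : kap ρ x x = 1 := by simp [kap]
lemma kapb_self (x : α) : kapb ρ x x = 1 := by simp [kapb]

lemma IsG.bar_eq (hρ : StrictMono ρ)
    (hE : ∀ x y : α, x < y → ∑ z ∈ Finset.univ.filter (fun z => x ≤ z ∧ z ≤ y), (-1 : ℚ) ^ ρ z = 0)
    {g : Matrix α α ℚ[X]} (hg : IsG ρ g) : bar ρ g = g * kap ρ := by
  ext1 x y
  have kz : ∀ x y : α, ¬ x ≤ y → kap ρ x y = 0 := fun x y => (adm_kap ρ x y).1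
  have kbz : ∀ x y : α, ¬ x ≤ y → kapb ρ x y = 0 := fun x y h => by simp [kapb, h]
  induction hn : ρ y using Nat.strong_induction_on generalizing y with
  | _ n ih =>
  subst hn
  have gkz : ∀ x y : α, ¬ x ≤ y → (g * kap ρ) x y = 0 := by
    intro x y h
    rw [Matrix.mul_apply]
    apply Finset.sum_eq_zero
    intro z _
    by_cases h1 : x ≤ z
    · rw [kz z y (fun h2 => h (h1.trans h2)), mul_zero]
    · rw [hg.z x z h1, zero_mul]
  by_cases hxy : x ≤ y
  swap
  · simp [gkz x y hxy, bar, hg.z x y hxy]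
  by_cases hne : x = y
  · subst hne
    rw [sum_split g _ hg.z kz le_rfl, kap_self, mul_one, Finset.sum_eq_zero]
    · simp [bar, hg.o, reflect_zero_one]
    · intro z hz; simp at hz
      exact absurd (lt_of_le_of_lt hz.1 hz.2) (lt_irrefl _)
  have hlt := lt_of_le_of_ne hxy hne
  have hrl := hρ hlt
  set s : ℚ[X] := ∑ z ∈ Finset.univ.filter (fun z => x ≤ z ∧ z < y), g x z * (X - 1) ^ (ρ y - ρ z)
    with hs
  have hs' : s = ∑ z ∈ Finset.univ.filter (fun z => x ≤ z ∧ z < y), g x z * kap ρ z y := by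
    apply Finset.sum_congr rfl
    intro z hz; simp at hz
    simp [kap, hz.2.le]
  have hgk : (g * kap ρ) x y = s + g x y := by
    rw [sum_split g _ hg.z kz hxy, kap_self, mul_one, hs']
  -- reflect s = - s
  have hrs : reflect (ρ y - ρ x) s = - s := by
    rw [hs', reflect_sum']
    simp only [mul_bar_apply ρ hρ hg.adm (adm_kap ρ), bar_kap]
    have e1 : ∑ z ∈ Finset.univ.filter (fun z => x ≤ z ∧ z < y), bar ρ g x z * kapb ρ z y
       = ∑ z ∈ Finset.univ.filter (fun z => x ≤ z ∧ z < y), (g * kap ρ) x z * kapb ρ z y := by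
      apply Finset.sum_congr rfl
      intro z hz; simp at hz
      rw [ih (ρ z) (hρ hz.2) z rfl]
    have e2 := sum_split (g * kap ρ) (kapb ρ) gkz kbz hxy
    rw [mul_assoc, kap_mul_kapb ρ hρ hE, mul_one, kapb_self, mul_one, hgk] at e2
    rw [e1, ← hs']
    linear_combination -e2
  have hsd : s.natDegree ≤ ρ y - ρ x := by
    rw [hs']
    apply natDegree_sum_le_of_forall_le
    intro z hz; simp at hz
    have h1 := (hg.adm x z).2
    have h2 := (adm_kap ρ z y).2
    have a1 := hρ.monotone hz.1
    have a2 := hρ hz.2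
    refine natDegree_mul_le.trans ?_
    omega
  rw [hgk]
  ext k
  have hc := congrArg (fun p => coeff p k) hrs
  simp only [coeff_reflect, coeff_neg] at hc
  simp only [bar, coeff_reflect, coeff_add, hg.r x y hlt, ← hs]
  by_cases hk : k ≤ ρ y - ρ x
  · rw [revAt_le hk] at hc ⊢
    by_cases h1 : 2 * k < ρ y - ρ x
    · rw [if_pos h1, if_neg (by omega)]; ring
    · rw [if_neg h1]
      by_cases h2 : 2 * (ρ y - ρ x - k) < ρ y - ρ x
      · rw [if_pos h2, hc]; ring
      · rw [if_neg h2]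
        have : ρ y - ρ x - k = k := by omega
        rw [this] at hc
        linarith
  · rw [revAt_eq_self_of_lt (by omega)] at hc ⊢
    rw [if_neg (by omega)]
    linarith

variable (ρ) in
noncomputable def Dm (A : Matrix α α ℚ[X]) : Matrix α α ℚ[X] :=
  fun x y => (1 - X) * derivative (A x y) + ((ρ y - ρ x : ℕ) : ℚ[X]) * A x y

lemma coeff_Dm (A : Matrix α α ℚ[X]) (x y : α) (k : ℕ) : (Dm ρ A x y).coeff k =
    ((k : ℚ) + 1) * (A x y).coeff (k + 1) + (((ρ y - ρ x : ℕ) : ℚ) - k) * (A x y).coeff k := by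
  unfold Dm
  rw [coeff_add, sub_mul, coeff_sub, one_mul, coeff_natCast_mul, coeff_derivative]
  cases k with
  | zero => simp
  | succ k => rw [coeff_X_mul, coeff_derivative]; push_cast; ring

lemma Dm_kap (x y : α) : Dm ρ (kap ρ) x y = 0 := by
  unfold Dm kap
  split_ifs
  · rcases Nat.eq_zero_or_pos (ρ y - ρ x) with h | h
    · simp [h]
    · obtain ⟨m, hm⟩ := Nat.exists_eq_succ_of_ne_zero h.ne'
      rw [hm]
      have := derivative_X_sub_C_pow (1:ℚ) (m+1)
      rw [C_1] at this
      rw [Nat.succ_eq_add_one, this]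
      simp
      ring
  · simp

lemma Dm_mul_kap (hρ : StrictMono ρ) {A : Matrix α α ℚ[X]} (hA : ∀ x y, ¬ x ≤ y → A x y = 0) :
    Dm ρ (A * kap ρ) = Dm ρ A * kap ρ := by
  ext1 x y
  rw [Matrix.mul_apply]
  unfold Dm
  rw [Matrix.mul_apply, derivative_sum, Finset.mul_sum, Finset.mul_sum, ← Finset.sum_add_distrib]
  apply Finset.sum_congr rfl
  intro z _
  by_cases h1 : x ≤ z
  · by_cases h2 : z ≤ y
    · have := Dm_kap (ρ := ρ) z y
      unfold Dm at this
      have e : ρ y - ρ x = (ρ z - ρ x) + (ρ y - ρ z) := by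
        have := hρ.monotone h1; have := hρ.monotone h2; omega
      rw [e, derivative_mul]
      push_cast
      linear_combination A x z * this
    · simp [(adm_kap ρ z y).1 h2]
  · simp [hA x z h1]

lemma bar_Dm {g : Matrix α α ℚ[X]} (hg : Adm ρ g) (x y : α)
    (h : (Dm ρ g x y).coeff (ρ y - ρ x) = 0) :
    bar ρ (Dm ρ g) x y = X * Dm ρ (bar ρ g) x y := by
  set n := ρ y - ρ x with hn
  have hd := (hg x y).2
  have hz : ∀ k, n < k → (g x y).coeff k = 0 := fun k hk =>
    coeff_eq_zero_of_natDegree_lt (lt_of_le_of_lt hd hk)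
  ext k
  cases k with
  | zero =>
    rw [coeff_X_mul_zero]
    simp only [bar, coeff_reflect, ← hn]
    rw [revAt_le (Nat.zero_le _), Nat.sub_zero, h]
  | succ k =>
    rw [coeff_X_mul, coeff_Dm]
    simp only [bar, coeff_reflect, ← hn]
    rw [coeff_Dm, ← hn]
    by_cases hk : k + 1 ≤ n
    · rw [revAt_le hk, revAt_le (by omega : k ≤ n)]
      have e : n - (k + 1) + 1 = n - k := by omega
      rw [e, Nat.cast_sub hk]
      push_cast; ring
    · rw [revAt_eq_self_of_lt (by omega), hz _ (by omega), hz (k+1) (by omega)]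
      by_cases hk2 : k ≤ n
      · have : k = n := by omega
        subst this; simp
      · rw [revAt_eq_self_of_lt (by omega), hz k (by omega)]; simp

variable (ρ) in
noncomputable def Mm (g : Matrix α α ℚ[X]) : Matrix α α ℚ[X] := fun x y =>
  if x ≤ y ∧ (ρ y - ρ x) % 2 = 1 then
    C ((((ρ y - ρ x) / 2 : ℕ) + 1 : ℚ) * (g x y).coeff ((ρ y - ρ x) / 2)) * X ^ ((ρ y - ρ x) / 2)
  else 0

lemma Mm_adm (g : Matrix α α ℚ[X]) : Adm ρ (Mm ρ g) := by
  intro x y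
  unfold Mm
  constructor
  · intro h; simp [h]
  · split_ifs
    · exact (natDegree_C_mul_X_pow_le _ _).trans (by omega)
    · simp

lemma bar_Mm (g : Matrix α α ℚ[X]) (x y : α) : bar ρ (Mm ρ g) x y = X * Mm ρ g x y := by
  unfold bar Mm
  split_ifs with h
  · rw [reflect_C_mul_X_pow, revAt_le (by omega)]
    have : ρ y - ρ x - (ρ y - ρ x) / 2 = (ρ y - ρ x) / 2 + 1 := by omega
    rw [this, pow_succ]; ring
  · simp

lemma main_mat (hρ : StrictMono ρ)
    (hE : ∀ x y : α, x < y → ∑ z ∈ Finset.univ.filter (fun z => x ≤ z ∧ z ≤ y), (-1 : ℚ) ^ ρ z = 0)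
    {g : Matrix α α ℚ[X]} (hg : IsG ρ g) : Dm ρ g = Mm ρ g * g := by
  have hbar := hg.bar_eq hρ hE
  have hD0 : ∀ x y, ¬ x ≤ y → Dm ρ g x y = 0 := fun x y h => by simp [Dm, hg.z x y h]
  have hDs : ∀ x, Dm ρ g x x = 0 := fun x => by simp [Dm, hg.o]
  have hDc : ∀ x y, x ≠ y → ∀ k, ρ y - ρ x ≤ 2 * k → (Dm ρ g x y).coeff k =
      0 := by
    intro x y h k hk
    rw [coeff_Dm, hg.coeff0 h hk, hg.coeff0 h (by omega)]; simp
  have hbD : bar ρ (Dm ρ g) = (X : ℚ[X]) • (Dm ρ g * kap ρ) := by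
    rw [← Dm_mul_kap hρ hg.z, ← hbar]
    ext1 x y
    rw [Matrix.smul_apply, smul_eq_mul]
    by_cases h : x = y
    · subst h
      unfold bar; rw [hDs]
      unfold Dm; simp [hg.o]
    · exact bar_Dm hg.adm x y (hDc x y h _ (by omega))
  have hbM : bar ρ (Mm ρ g * g) = (X : ℚ[X]) • (Mm ρ g * g * kap ρ) := by
    rw [bar_mul ρ hρ (Mm_adm g) hg.adm, hbar, Matrix.mul_assoc, ← Matrix.smul_mul]
    congr 1
    ext1 x y
    rw [bar_Mm]; rfl
  ext1 x y
  induction hn : ρ y using Nat.strong_induction_on generalizing y with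
  | _ n ih =>
  subst hn
  have kz : ∀ x y : α, ¬ x ≤ y → kap ρ x y = 0 := fun x y => (adm_kap ρ x y).1
  have Mgz : ∀ x y : α, ¬ x ≤ y → (Mm ρ g * g) x y = 0 := by
    intro x y h
    rw [Matrix.mul_apply]
    apply Finset.sum_eq_zero
    intro z _
    by_cases h1 : x ≤ z
    · rw [hg.z z y (fun h2 => h (h1.trans h2)), mul_zero]
    · rw [(Mm_adm g x z).1 h1, zero_mul]
  by_cases hxy : x ≤ y
  swap
  · rw [Mgz x y hxy, hD0 x y hxy]
  by_cases hne : x = y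
  · subst hne
    rw [hDs, sum_split _ _ (fun x y => (Mm_adm g x y).1) hg.z le_rfl, Finset.sum_eq_zero]
    · simp [Mm]
    · intro z hz; simp at hz
      exact absurd (lt_of_le_of_lt hz.1 hz.2) (lt_irrefl _)
  have hlt := lt_of_le_of_ne hxy hne
  have hrl := hρ hlt
  have h1 := congrFun (congrFun hbD x) y
  have h2 := congrFun (congrFun hbM x) y
  rw [Matrix.smul_apply, sum_split _ _ hD0 kz hxy, kap_self, mul_one, smul_eq_mul] at h1
  rw [Matrix.smul_apply, sum_split _ _ Mgz kz hxy, kap_self, mul_one, smul_eq_mul] at h2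
  have h3 : ∑ z ∈ Finset.univ.filter (fun z => x ≤ z ∧ z < y), Dm ρ g x z * kap ρ z y
     = ∑ z ∈ Finset.univ.filter (fun z => x ≤ z ∧ z < y), (Mm ρ g * g) x z * kap ρ z y := by
    apply Finset.sum_congr rfl
    intro z hz; simp at hz
    rw [ih (ρ z) (hρ hz.2) z rfl]
  rw [h3] at h1
  -- the coefficients of Mg
  have hMc : ∀ k, ρ y - ρ x ≤ 2 * k + 1 → ((Mm ρ g * g) x y).coeff k = (Mm ρ g x y).coeff k := by
    intro k hk
    rw [sum_split _ _ (fun x y => (Mm_adm g x y).1) hg.z hxy, hg.o, mul_one, coeff_add,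
      finsetSum_coeff, Finset.sum_eq_zero, zero_add]
    intro z hz; simp at hz
    have a1 := hρ.monotone hz.1
    have a2 := hρ hz.2
    unfold Mm
    split_ifs with h
    · rw [mul_assoc, coeff_C_mul, coeff_X_pow_mul']
      split_ifs
      · rw [hg.coeff0 (ne_of_lt hz.2) (by omega), mul_zero]
      · simp
    · simp
  have hq : ∀ k, ρ y - ρ x ≤ 2 * k + 1 → (Dm ρ g x y).coeff k = ((Mm ρ g * g) x y).coeff k := by
    intro k hk
    rw [hMc k hk]
    unfold Mm
    by_cases hk2 : ρ y - ρ x = 2 * k + 1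
    · rw [if_pos ⟨hxy, by omega⟩, coeff_C_mul, coeff_X_pow, if_pos (by omega), coeff_Dm,
        hg.coeff0 hne (k := k + 1) (by omega)]
      have : (ρ y - ρ x) / 2 = k := by omega
      rw [this, hk2]; push_cast; ring
    · rw [hDc x y hne k (by omega)]
      split_ifs with h
      · rw [coeff_C_mul, coeff_X_pow, if_neg (by omega), mul_zero]
      · simp
  ext k
  by_cases hk : ρ y - ρ x ≤ 2 * k + 1
  · exact hq k hk
  · have c1 := congrArg (fun p => coeff p (k + 1)) h1
    have c2 := congrArg (fun p => coeff p (k + 1)) h2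
    simp only [bar, coeff_reflect, coeff_X_mul, coeff_add] at c1 c2
    rw [revAt_le (by omega)] at c1 c2
    rw [hq _ (by omega)] at c1
    linarith

theorem main_abs (hρ : StrictMono ρ)
    (hE : ∀ x y : α, x < y → ∑ z ∈ Finset.univ.filter (fun z => x ≤ z ∧ z ≤ y), (-1 : ℚ) ^ ρ z = 0)
    {g : Matrix α α ℚ[X]} (hg : IsG ρ g) (x y : α) (k : ℕ) :
    ((k : ℚ) + 1) * (g x y).coeff (k + 1) + (((ρ y - ρ x : ℕ) : ℚ) - k) * (g x y).coeff k =
    ∑ i ∈ Finset.range (k + 1), ((i : ℚ) + 1) *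
      ∑ z ∈ Finset.univ.filter (fun z => x ≤ z ∧ ρ z - ρ x = 2 * i + 1),
        (g x z).coeff i * (g z y).coeff (k - i) := by
  rw [← coeff_Dm, main_mat hρ hE hg, Matrix.mul_apply, finsetSum_coeff]
  simp only [Finset.mul_sum, Finset.sum_filter]
  rw [Finset.sum_comm]
  apply Finset.sum_congr rfl
  intro z _
  unfold Mm
  split_ifs with h
  · rw [mul_assoc, coeff_C_mul, coeff_X_pow_mul']
    by_cases h2 : (ρ z - ρ x) / 2 ≤ k
    · rw [Finset.sum_eq_single ((ρ z - ρ x) / 2)]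
      · rw [if_pos h2, if_pos ⟨h.1, by omega⟩]; ring
      · intro b _ hb
        rw [if_neg (by omega)]; simp
      · intro h; simp at h; omega
    · rw [if_neg h2, Finset.sum_eq_zero]; · simp
      intro i hi; simp at hi
      rw [if_neg (by omega)]; simp
  · rw [Finset.sum_eq_zero]; · simp
    intro i hi
    rw [if_neg]; · simp
    intro h3; exact h ⟨h3.1, by omega⟩

end Abs
end KalaiAux
namespace KalaiAux
section Geo
variable {V : Type*} [AddCommGroup V] [Module ℝ V]

lemma pdim_insert_mem {A : Set V} {v : V} (h : v ∈ affineSpan ℝ A) :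
    pdim (insert v A) = pdim A := by
  have hA : A.Nonempty := by
    rw [← affineSpan_nonempty ℝ]; exact ⟨v, h⟩
  unfold pdim
  rw [if_neg (Set.insert_nonempty v A).ne_empty, if_neg hA.ne_empty, direction_affineSpan,
    direction_affineSpan, vectorSpan_insert_eq_vectorSpan h]

lemma pdim_mono {A B : Set V} (h : A ⊆ B) (hB : B.Finite) : pdim A ≤ pdim B := by
  unfold pdim
  split_ifs with h1 h2 h3
  · rfl
  · omega
  · subst h3; exact absurd (Set.subset_empty_iff.1 h) h1
  · have := finiteDimensional_direction_affineSpan_of_finite ℝ hB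
    exact_mod_cast Submodule.finrank_mono
      (AffineSubspace.direction_le (affineSpan_mono ℝ h))

lemma pdim_insert_notMem {A : Set V} {v : V} (hA : A.Finite) (h : v ∉ affineSpan ℝ A) :
    pdim (insert v A) = pdim A + 1 := by
  unfold pdim
  rw [if_neg (Set.insert_nonempty v A).ne_empty]
  split_ifs with h1
  · subst h1
    rw [insert_empty_eq, direction_affineSpan, vectorSpan_singleton]
    simp
  · obtain ⟨a, ha⟩ := Set.nonempty_iff_ne_empty.2 h1
    have hle := finrank_vectorSpan_insert_le_set ℝ A v
    rw [← direction_affineSpan, ← direction_affineSpan] at hle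
    have hf := finiteDimensional_direction_affineSpan_of_finite ℝ (hA.insert v)
    have hlt : (affineSpan ℝ A).direction < (affineSpan ℝ (insert v A)).direction := by
      refine lt_of_le_of_ne
        (AffineSubspace.direction_le (affineSpan_mono ℝ (Set.subset_insert _ _))) ?_
      intro he
      apply h
      have : v -ᵥ a ∈ (affineSpan ℝ (insert v A)).direction :=
        AffineSubspace.vsub_mem_direction (subset_affineSpan ℝ _ (Set.mem_insert _ _))
          (subset_affineSpan ℝ _ (Set.mem_insert_of_mem _ ha))
      rw [← he] at this
      have h2 := AffineSubspace.vadd_mem_of_mem_direction this (subset_affineSpan ℝ _ ha)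
      simpa using h2
    have := Submodule.finrank_lt_finrank_of_lt hlt
    omega

lemma neg_one_le_pdim (A : Set V) : -1 ≤ pdim A := by
  unfold pdim; split_ifs <;> omega

lemma exists_affine {A : Set V} {v : V} (h : v ∉ affineSpan ℝ A) :
    ∃ ψ : V →ᵃ[ℝ] ℝ, (∀ a ∈ A, ψ a = 0) ∧ ψ v = 1 := by
  rcases A.eq_empty_or_nonempty with rfl | ⟨a, ha⟩
  · exact ⟨AffineMap.const ℝ V 1, by simp, by simp⟩
  · have hv : v - a ∉ (affineSpan ℝ A).direction := by
      intro h2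
      apply h
      have h3 := AffineSubspace.vadd_mem_of_mem_direction h2 (subset_affineSpan ℝ _ ha)
      simpa using h3
    obtain ⟨f, hf, hk⟩ := Submodule.exists_le_ker_of_notMem hv
    refine ⟨(f (v - a))⁻¹ • (f.toAffineMap - AffineMap.const ℝ V (f a)), ?_, ?_⟩
    · intro b hb
      have : b - a ∈ (affineSpan ℝ A).direction :=
        AffineSubspace.vsub_mem_direction (subset_affineSpan ℝ _ hb) (subset_affineSpan ℝ _ ha)
      have := hk this
      rw [LinearMap.mem_ker, map_sub] at this
      simp [this]
    · simp only [AffineMap.coe_smul, Pi.smul_apply, AffineMap.coe_sub, Pi.sub_apply, LinearMap.coe_toAffineMap,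
        AffineMap.const_apply, smul_eq_mul]
      change (f (v - a))⁻¹ * (f v - f a) = 1
      rw [← map_sub, inv_mul_cancel₀ hf]

lemma affine_zero {A : Set V} {v : V} (h : v ∈ affineSpan ℝ A) (ψ : V →ᵃ[ℝ] ℝ)
    (hψ : ∀ a ∈ A, ψ a = 0) : ψ v = 0 := by
  have : affineSpan ℝ A ≤ (affineSpan ℝ {(0:ℝ)}).comap ψ := by
    rw [affineSpan_le]
    intro a ha
    simp [hψ a ha]
  have := this h
  simpa using this

/-- algebraically open convex sets of affine functionals -/
def GoodR (R : Set (V →ᵃ[ℝ] ℝ)) : Prop :=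
  (∀ φ ∈ R, ∀ ψ ∈ R, ∀ a b : ℝ, 0 < a → 0 < b → a + b = 1 → a • φ + b • ψ ∈ R) ∧
  ∀ φ ∈ R, ∀ ψ : V →ᵃ[ℝ] ℝ, ∃ ε > 0, ∀ δ : ℝ, |δ| ≤ ε → φ + δ • ψ ∈ R

lemma exists_eps (a b : ℝ) (h : 0 < a) : ∃ ε > 0, ∀ δ : ℝ, |δ| ≤ ε → 0 < a + δ * b := by
  refine ⟨a / (2 * (|b| + 1)), by positivity, fun δ hδ => ?_⟩
  have h1 : |δ * b| ≤ a / 2 := by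
    rw [abs_mul]
    calc |δ| * |b| ≤ a / (2 * (|b| + 1)) * (|b| + 1) := by
          gcongr; linarith
      _ = a / 2 := by field_simp
  have := neg_abs_le (δ * b)
  linarith

lemma GoodR.inter {R : Set (V →ᵃ[ℝ] ℝ)} (hR : GoodR R) (v : V) :
    GoodR (R ∩ {φ | φ v < 0}) := by
  refine ⟨?_, ?_⟩
  · rintro φ ⟨h1, h2⟩ ψ ⟨h3, h4⟩ a b ha hb hab
    refine ⟨hR.1 φ h1 ψ h3 a b ha hb hab, ?_⟩
    simp only [Set.mem_ofPred_eq, AffineMap.coe_add, Pi.add_apply, AffineMap.coe_smul, Pi.smul_apply, smul_eq_mul] at *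
    nlinarith
  · rintro φ ⟨h1, h2⟩ ψ
    obtain ⟨ε, hε, h⟩ := hR.2 φ h1 ψ
    obtain ⟨ε', hε', h'⟩ := exists_eps (-(φ v)) (-(ψ v)) (by simpa using h2)
    refine ⟨min ε ε', lt_min hε hε', fun δ hδ => ⟨h δ (hδ.trans (min_le_left _ _)), ?_⟩⟩
    have := h' δ (hδ.trans (min_le_right _ _))
    simp only [Set.mem_ofPred_eq, AffineMap.coe_add, Pi.add_apply, AffineMap.coe_smul, Pi.smul_apply, smul_eq_mul] at *
    linarith

/-- finite perturbation -/
lemma GoodR.pert {R : Set (V →ᵃ[ℝ] ℝ)} (hR : GoodR R) (S : Finset V) (φ : V →ᵃ[ℝ] ℝ)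
    (hφ : φ ∈ R) (hS : ∀ s ∈ S, 0 < φ s) (ψ : V →ᵃ[ℝ] ℝ) :
    ∃ ε > 0, ∀ δ : ℝ, |δ| ≤ ε → φ + δ • ψ ∈ R ∧ ∀ s ∈ S, 0 < φ s + δ * ψ s := by
  induction S using Finset.induction_on with
  | empty =>
    obtain ⟨ε, hε, h⟩ := hR.2 φ hφ ψ
    exact ⟨ε, hε, fun δ hδ => ⟨h δ hδ, by simp⟩⟩
  | insert v S hv ih =>
    obtain ⟨ε, hε, h⟩ := ih (fun s hs => hS s (Finset.mem_insert_of_mem hs))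
    obtain ⟨ε', hε', h'⟩ := exists_eps (φ v) (ψ v) (hS v (Finset.mem_insert_self _ _))
    refine ⟨min ε ε', lt_min hε hε', fun δ hδ => ?_⟩
    have h1 := h δ (hδ.trans (min_le_left _ _))
    have h2 := h' δ (hδ.trans (min_le_right _ _))
    refine ⟨h1.1, fun s hs => ?_⟩
    rcases Finset.mem_insert.1 hs with rfl | hs
    · exact h2
    · exact h1.2 s hs

def Cell (K A S : Finset V) (R : Set (V →ᵃ[ℝ] ℝ)) : Prop :=
  ∃ φ ∈ R, (∀ x ∈ K ∪ A, φ x = 0) ∧ ∀ x ∈ S, x ∉ A → 0 < φ x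

noncomputable def rk (A : Finset V) : ℕ := (pdim (A : Set V) + 1).toNat

noncomputable def EE (K S : Finset V) (R : Set (V →ᵃ[ℝ] ℝ)) : ℚ :=
  ∑ A ∈ S.powerset, if Cell K A S R then (-1 : ℚ) ^ rk (K ∪ A) else 0

lemma EE_insert (K S : Finset V) (v : V) (hv : v ∉ S) (R : Set (V →ᵃ[ℝ] ℝ)) (hR : GoodR R) :
    EE K (insert v S) R = EE K S R - EE K S (R ∩ {φ | φ v < 0}) := by
  unfold EE
  rw [Finset.sum_powerset_insert hv, ← Finset.sum_add_distrib, ← Finset.sum_sub_distrib]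
  apply Finset.sum_congr rfl
  intro A hA
  rw [Finset.mem_powerset] at hA
  have hvA : v ∉ A := fun h => hv (hA h)
  have e : K ∪ insert v A = insert v (K ∪ A) := by ext; simp
  by_cases hsp : v ∈ affineSpan ℝ ((K ∪ A : Finset V) : Set V)
  · have hz : ∀ φ : V →ᵃ[ℝ] ℝ, (∀ x ∈ K ∪ A, φ x = 0) → φ v = 0 := fun φ hφ =>
      affine_zero hsp φ (by simpa using hφ)
    have c1 : ¬ Cell K A (insert v S) R := by
      rintro ⟨φ, h1, h2, h3⟩
      have := h3 v (Finset.mem_insert_self _ _) hvA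
      rw [hz φ h2] at this; exact lt_irrefl _ this
    have c2 : ¬ Cell K A S (R ∩ {φ | φ v < 0}) := by
      rintro ⟨φ, ⟨h1, h1'⟩, h2, h3⟩
      simp only [Set.mem_ofPred_eq] at h1'
      rw [hz φ h2] at h1'; exact lt_irrefl _ h1'
    have c3 : Cell K (insert v A) (insert v S) R ↔ Cell K A S R := by
      constructor
      · rintro ⟨φ, h1, h2, h3⟩
        refine ⟨φ, h1, fun x hx => h2 x (by rw [e]; exact Finset.mem_insert_of_mem hx), ?_⟩
        intro x hx hxA
        refine h3 x (Finset.mem_insert_of_mem hx) ?_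
        simp [hxA]; rintro rfl; exact hv hx
      · rintro ⟨φ, h1, h2, h3⟩
        refine ⟨φ, h1, ?_, ?_⟩
        · intro x hx
          rw [e] at hx
          rcases Finset.mem_insert.1 hx with rfl | hx
          · exact hz φ h2
          · exact h2 x hx
        · intro x hx hxA
          simp at hx hxA
          rcases hx with rfl | hx
          · exact absurd rfl hxA.1
          · exact h3 x hx hxA.2
    have c4 : rk (K ∪ insert v A) = rk (K ∪ A) := by
      unfold rk
      rw [e, Finset.coe_insert, pdim_insert_mem hsp]
    rw [if_neg c1, if_neg c2, c4]
    simp only [c3]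
    ring
  · have c4 : rk (K ∪ insert v A) = rk (K ∪ A) + 1 := by
      unfold rk
      rw [e, Finset.coe_insert, pdim_insert_notMem (Finset.finite_toSet _) hsp]
      have := neg_one_le_pdim ((K ∪ A : Finset V) : Set V)
      omega
    obtain ⟨ψ, hψ0, hψ1⟩ := exists_affine hsp
    have cp : Cell K A (insert v S) R ↔
        ∃ φ ∈ R, (∀ x ∈ K ∪ A, φ x = 0) ∧ (∀ x ∈ S, x ∉ A → 0 < φ x) ∧ 0 < φ v := by
      constructor
      · rintro ⟨φ, h1, h2, h3⟩
        exact ⟨φ, h1, h2, fun x hx => h3 x (Finset.mem_insert_of_mem hx),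
          h3 v (Finset.mem_insert_self _ _) hvA⟩
      · rintro ⟨φ, h1, h2, h3, h4⟩
        refine ⟨φ, h1, h2, fun x hx hxA => ?_⟩
        rcases Finset.mem_insert.1 hx with rfl | hx
        · exact h4
        · exact h3 x hx hxA
    have cm : Cell K A S (R ∩ {φ | φ v < 0}) ↔
        ∃ φ ∈ R, (∀ x ∈ K ∪ A, φ x = 0) ∧ (∀ x ∈ S, x ∉ A → 0 < φ x) ∧ φ v < 0 := by
      constructor
      · rintro ⟨φ, ⟨h1, h1'⟩, h2, h3⟩
        exact ⟨φ, h1, h2, h3, h1'⟩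
      · rintro ⟨φ, h1, h2, h3, h4⟩
        exact ⟨φ, ⟨h1, h4⟩, h2, h3⟩
    have cz : Cell K (insert v A) (insert v S) R ↔
        ∃ φ ∈ R, (∀ x ∈ K ∪ A, φ x = 0) ∧ (∀ x ∈ S, x ∉ A → 0 < φ x) ∧ φ v = 0 := by
      constructor
      · rintro ⟨φ, h1, h2, h3⟩
        refine ⟨φ, h1, fun x hx => h2 x (by rw [e]; exact Finset.mem_insert_of_mem hx), ?_,
          h2 v (by rw [e]; exact Finset.mem_insert_self _ _)⟩
        intro x hx hxA
        refine h3 x (Finset.mem_insert_of_mem hx) ?_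
        simp [hxA]; rintro rfl; exact hv hx
      · rintro ⟨φ, h1, h2, h3, h4⟩
        refine ⟨φ, h1, ?_, ?_⟩
        · intro x hx
          rw [e] at hx
          rcases Finset.mem_insert.1 hx with rfl | hx
          · exact h4
          · exact h2 x hx
        · intro x hx hxA
          simp at hx hxA
          rcases hx with rfl | hx
          · exact absurd rfl hxA.1
          · exact h3 x hx hxA.2
    have hzall : Cell K (insert v A) (insert v S) R →
        Cell K A (insert v S) R ∧ Cell K A S (R ∩ {φ | φ v < 0}) := by
      rw [cz, cp, cm]
      rintro ⟨φ, h1, h2, h3, h4⟩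
      obtain ⟨ε, hε, h⟩ := hR.pert (S.filter (· ∉ A)) φ h1
        (fun s hs => h3 s (Finset.mem_filter.1 hs).1 (Finset.mem_filter.1 hs).2) ψ
      have hp := h ε (abs_of_pos hε).le
      have hm := h (-ε) (by rw [abs_neg]; exact (abs_of_pos hε).le)
      constructor
      · refine ⟨_, hp.1, ?_, ?_, ?_⟩
        · intro x hx; simp [h2 x hx, hψ0 x (by simpa using hx)]
        · intro x hx hxA
          simpa using hp.2 x (Finset.mem_filter.2 ⟨hx, hxA⟩)
        · simp [h4, hψ1, hε]
      · refine ⟨_, hm.1, ?_, ?_, ?_⟩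
        · intro x hx; simp [h2 x hx, hψ0 x (by simpa using hx)]
        · intro x hx hxA
          simpa using hm.2 x (Finset.mem_filter.2 ⟨hx, hxA⟩)
        · simp [h4, hψ1, hε]
    have hpm : Cell K A (insert v S) R → Cell K A S (R ∩ {φ | φ v < 0}) →
        Cell K (insert v A) (insert v S) R := by
      rw [cz, cp, cm]
      rintro ⟨φ, h1, h2, h3, h4⟩ ⟨χ, k1, k2, k3, k4⟩
      have hd : 0 < φ v - χ v := by linarith
      have ha : 0 < -(χ v) / (φ v - χ v) := div_pos (by linarith) hd
      have hb : 0 < φ v / (φ v - χ v) := div_pos h4 hd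
      refine ⟨_, hR.1 φ h1 χ k1 (-(χ v) / (φ v - χ v)) (φ v / (φ v - χ v)) ha hb ?_, ?_, ?_, ?_⟩
      · field_simp; ring
      · intro x hx; simp [h2 x hx, k2 x hx]
      · intro x hx hxA
        have := h3 x hx hxA
        have := k3 x hx hxA
        simp only [AffineMap.coe_add, Pi.add_apply, AffineMap.coe_smul, Pi.smul_apply, smul_eq_mul]
        positivity
      · simp only [AffineMap.coe_add, Pi.add_apply, AffineMap.coe_smul, Pi.smul_apply, smul_eq_mul]
        field_simp; ring
    have hall : Cell K A S R ↔ Cell K A (insert v S) R ∨ Cell K A S (R ∩ {φ | φ v < 0}) ∨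
        Cell K (insert v A) (insert v S) R := by
      rw [cz, cp, cm]
      constructor
      · rintro ⟨φ, h1, h2, h3⟩
        rcases lt_trichotomy (φ v) 0 with h | h | h
        · exact Or.inr (Or.inl ⟨φ, h1, h2, h3, h⟩)
        · exact Or.inr (Or.inr ⟨φ, h1, h2, h3, h⟩)
        · exact Or.inl ⟨φ, h1, h2, h3, h⟩
      · rintro (⟨φ, h1, h2, h3, -⟩ | ⟨φ, h1, h2, h3, -⟩ | ⟨φ, h1, h2, h3, -⟩) <;>
        exact ⟨φ, h1, h2, h3⟩
    clear cp cm cz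
    rw [c4, pow_succ]
    by_cases p : Cell K A (insert v S) R <;> by_cases m : Cell K A S (R ∩ {φ | φ v < 0}) <;>
    by_cases z : Cell K (insert v A) (insert v S) R <;> by_cases a : Cell K A S R <;>
    simp only [p, m, z, a, if_true, if_false] <;> first | ring1 | (exfalso; tauto)

lemma EE_eval (K S : Finset V) (R : Set (V →ᵃ[ℝ] ℝ)) (hR : GoodR R)
    (φ : V →ᵃ[ℝ] ℝ) (hφ : φ ∈ R) (hK : ∀ x ∈ K, φ x = 0) (hS : ∀ x ∈ S, φ x < 0) :
    EE K S R = if S = ∅ then (-1 : ℚ) ^ rk K else 0 := by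
  induction S using Finset.induction_on generalizing R with
  | empty =>
    have : Cell K ∅ ∅ R := ⟨φ, hφ, by simpa using hK, by simp⟩
    simp [EE, this]
  | insert v S hv ih =>
    have hS' : ∀ x ∈ S, φ x < 0 := fun x hx => hS x (Finset.mem_insert_of_mem hx)
    rw [EE_insert K S v hv R hR, ih R hR hφ hS',
      ih _ (hR.inter v) ⟨hφ, hS v (Finset.mem_insert_self _ _)⟩ hS']
    simp

lemma euler_comb (K S : Finset V) (hne : S.Nonempty) 
    (φ : V →ᵃ[ℝ] ℝ) (hK : ∀ x ∈ K, φ x = 0) (hS : ∀ x ∈ S, 0 < φ x) :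
    EE K S Set.univ = 0 := by
  rw [EE_eval K S Set.univ ⟨by simp, fun _ _ _ => ⟨1, one_pos, by simp⟩⟩ (-φ) trivial
    (by intro x hx; simp [hK x hx]) (by intro x hx; simpa using hS x hx), if_neg hne.ne_empty]

end Geo
end KalaiAux
namespace KalaiAux
section Faces
variable {V : Type*} [AddCommGroup V] [Module ℝ V]

lemma nonneg_hull {S : Set V} {φ : V →ᵃ[ℝ] ℝ} (h : ∀ s ∈ S, 0 ≤ φ s) {x : V}
    (hx : x ∈ convexHull ℝ S) : 0 ≤ φ x := by
  have hc : Convex ℝ (φ ⁻¹' Set.Ici 0) := (convex_Ici 0).affine_preimage φ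
  exact convexHull_min (fun s hs => h s hs) hc hx

lemma zero_hull {S : Set V} {φ : V →ᵃ[ℝ] ℝ} (h : ∀ s ∈ S, φ s = 0) {x : V}
    (hx : x ∈ convexHull ℝ S) : φ x = 0 := by
  have h1 := nonneg_hull (φ := φ) (fun s hs => (h s hs).ge) hx
  have h2 := nonneg_hull (φ := -φ) (fun s hs => by simp [h s hs]) hx
  simp at h2
  linarith

lemma mem_zero_hull {S : Finset V} {φ : V →ᵃ[ℝ] ℝ} (h : ∀ s ∈ S, 0 ≤ φ s) {x : V}
    (hx : x ∈ convexHull ℝ (S : Set V)) (h0 : φ x = 0) :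
    x ∈ convexHull ℝ ((S.filter (fun s => φ s = 0) : Finset V) : Set V) := by
  rw [Finset.mem_convexHull'] at hx ⊢
  obtain ⟨w, hw0, hw1, hwx⟩ := hx
  have hφ : ∀ y, φ y = φ.linear y + φ 0 := fun y => by
    conv_lhs => rw [AffineMap.decomp φ]
    rfl
  have hsum : ∑ s ∈ S, w s * φ s = 0 := by
    rw [← h0, hφ x, ← hwx, map_sum]
    simp only [map_smul, smul_eq_mul]
    rw [← one_mul (φ 0), ← hw1, Finset.sum_mul, ← Finset.sum_add_distrib]
    apply Finset.sum_congr rfl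
    intro s _
    rw [hφ s]; ring
  have hz : ∀ s ∈ S, w s * φ s = 0 :=
    (Finset.sum_eq_zero_iff_of_nonneg (fun s hs => mul_nonneg (hw0 s hs) (h s hs))).1 hsum
  have hw : ∀ s ∈ S, φ s ≠ 0 → w s = 0 := fun s hs hne =>
    (mul_eq_zero.1 (hz s hs)).resolve_right hne
  refine ⟨w, fun y hy => hw0 y (Finset.mem_filter.1 hy).1, ?_, ?_⟩
  · rw [← hw1]
    apply Finset.sum_subset (Finset.filter_subset _ _)
    intro s hs hs2
    exact hw s hs (fun h3 => hs2 (Finset.mem_filter.2 ⟨hs, h3⟩))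
  · rw [← hwx]
    apply Finset.sum_subset (Finset.filter_subset _ _)
    intro s hs hs2
    rw [hw s hs (fun h3 => hs2 (Finset.mem_filter.2 ⟨hs, h3⟩)), zero_smul]

lemma isFace_of_aff {G F : Set V} (φ : V →ᵃ[ℝ] ℝ) (h : ∀ x ∈ G, 0 ≤ φ x)
    (hF : F = {x | x ∈ G ∧ φ x = 0}) : IsFace G F := by
  rcases F.eq_empty_or_nonempty with h0 | ⟨a, ha⟩
  · exact Or.inr (Or.inl h0)
  · refine Or.inr (Or.inr ⟨-φ.linear, ?_⟩)
    have hφ : ∀ y, φ y = φ.linear y + φ 0 := fun y => by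
      conv_lhs => rw [AffineMap.decomp φ]
      rfl
    rw [hF] at ha ⊢
    ext x
    simp only [Set.mem_ofPred_eq, LinearMap.neg_apply] at ha ⊢
    constructor
    · rintro ⟨h1, h2⟩
      refine ⟨h1, fun y hy => ?_⟩
      have := h y hy
      have := hφ x; have := hφ y
      linarith
    · rintro ⟨h1, h2⟩
      refine ⟨h1, ?_⟩
      have := h x h1
      have := h2 a ha.1
      have := hφ x; have := hφ a
      linarith [ha.2]

lemma isFace_iff {G F : Set V} (hG : IsPolytope G) : IsFace G F ↔
    ∃ φ : V →ᵃ[ℝ] ℝ, (∀ x ∈ G, 0 ≤ φ x) ∧ F = {x | x ∈ G ∧ φ x = 0} := by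
  constructor
  · rintro (h | h | ⟨l, h⟩)
    · exact ⟨0, by simp, by simp [h]⟩
    · exact ⟨AffineMap.const ℝ V 1, by simp, by simp [h]⟩
    · obtain ⟨S, rfl⟩ := hG
      rcases S.eq_empty_or_nonempty with rfl | hS
      · exact ⟨0, by simp, by simp [h]⟩
      · obtain ⟨s, hs, hmax⟩ := S.exists_max_image l hS
        have hsG : s ∈ convexHull ℝ (S : Set V) := subset_convexHull ℝ _ hs
        have hval : ∀ x, (AffineMap.const ℝ V (l s) - l.toAffineMap) x = l s - l x := fun x => rfl
        have hn : ∀ x ∈ convexHull ℝ (S : Set V), 0 ≤ (AffineMap.const ℝ V (l s) - l.toAffineMap) x :=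
          fun x hx => nonneg_hull (fun t ht => by rw [hval]; linarith [hmax t ht]) hx
        refine ⟨AffineMap.const ℝ V (l s) - l.toAffineMap, hn, ?_⟩
        rw [h]
        ext x
        simp only [Set.mem_ofPred_eq, hval] at hn ⊢
        constructor
        · rintro ⟨h1, h2⟩
          exact ⟨h1, by linarith [h2 s hsG, hn x h1]⟩
        · rintro ⟨h1, h2⟩
          exact ⟨h1, fun y hy => by linarith [hn y hy]⟩
  · rintro ⟨φ, h1, h2⟩
    exact isFace_of_aff φ h1 h2

lemma face_subset {G F : Set V} (h : IsFace G F) : F ⊆ G := by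
  rcases h with rfl | rfl | ⟨l, rfl⟩
  · exact subset_rfl
  · exact Set.empty_subset _
  · exact fun x hx => hx.1

lemma hull_filter {S : Finset V} {φ : V →ᵃ[ℝ] ℝ} (h : ∀ s ∈ S, 0 ≤ φ s) :
    convexHull ℝ ((S.filter (fun s => φ s = 0) : Finset V) : Set V)
      = {x | x ∈ convexHull ℝ (S : Set V) ∧ φ x = 0} := by
  ext x
  constructor
  · intro hx
    refine ⟨convexHull_mono (Finset.coe_subset.2 (Finset.filter_subset _ _)) hx, zero_hull ?_ hx⟩
    intro s hs; simp at hs; exact hs.2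
  · rintro ⟨h1, h2⟩
    exact mem_zero_hull h h1 h2

lemma face_eq {S : Finset V} {F : Set V} (h : IsFace (convexHull ℝ (S : Set V)) F) :
    F = convexHull ℝ ((S.filter (fun s => s ∈ F) : Finset V) : Set V) := by
  obtain ⟨φ, h1, h2⟩ := (isFace_iff ⟨S, rfl⟩).1 h
  have hS : ∀ s ∈ S, s ∈ convexHull ℝ (S : Set V) := fun s hs => subset_convexHull ℝ _ hs
  have e : S.filter (fun s => s ∈ F) = S.filter (fun s => φ s = 0) := by
    apply Finset.filter_congr
    intro s hs
    rw [h2]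
    exact ⟨fun h => h.2, fun h => ⟨hS s hs, h⟩⟩
  rw [e, hull_filter (fun s hs => h1 s (hS s hs))]
  exact h2

lemma face_polytope {G F : Set V} (hG : IsPolytope G) (h : IsFace G F) : IsPolytope F := by
  obtain ⟨S, rfl⟩ := hG
  exact ⟨_, face_eq h⟩

lemma face_restrict {G G' F : Set V} (hG : IsPolytope G) (hF : IsFace G F) (h1 : F ⊆ G')
    (h2 : G' ⊆ G) : IsFace G' F := by
  obtain ⟨φ, k1, k2⟩ := (isFace_iff hG).1 hF
  refine isFace_of_aff φ (fun x hx => k1 x (h2 hx)) ?_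
  ext x
  constructor
  · intro hx; refine ⟨h1 hx, ?_⟩
    rw [k2] at hx; exact hx.2
  · rintro ⟨a, b⟩; rw [k2]; exact ⟨h2 a, b⟩

lemma exists_big (S : Finset V) (φ ψ : V → ℝ) (h : ∀ s ∈ S, 0 ≤ φ s) :
    ∃ N : ℝ, ∀ s ∈ S, φ s ≠ 0 → 0 < N * φ s + ψ s := by
  induction S using Finset.induction_on with
  | empty => exact ⟨0, by simp⟩
  | insert v S hv ih =>
    obtain ⟨N, hN⟩ := ih (fun s hs => h s (Finset.mem_insert_of_mem hs))
    refine ⟨max N ((|ψ v| + 1) / φ v), fun s hs hne => ?_⟩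
    have hp : 0 < φ s := lt_of_le_of_ne (h s hs) (Ne.symm hne)
    rcases Finset.mem_insert.1 hs with rfl | hs
    · have : (|ψ s| + 1) / φ s * φ s ≤ max N ((|ψ s| + 1) / φ s) * φ s := by
        gcongr; exact le_max_right _ _
      rw [div_mul_cancel₀ _ hne] at this
      linarith [neg_abs_le (ψ s)]
    · have : N * φ s ≤ max N ((|ψ v| + 1) / φ v) * φ s := by
        gcongr; exact le_max_left _ _
      linarith [hN s hs hne]

lemma face_trans {G G' F : Set V} (hG : IsPolytope G) (h1 : IsFace G G') (h2 : IsFace G' F) :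
    IsFace G F := by
  have hG' := face_polytope hG h1
  obtain ⟨φ, k1, k2⟩ := (isFace_iff hG).1 h1
  obtain ⟨ψ, m1, m2⟩ := (isFace_iff hG').1 h2
  obtain ⟨S, rfl⟩ := hG
  have hS : ∀ s ∈ S, s ∈ convexHull ℝ (S : Set V) := fun s hs => subset_convexHull ℝ _ hs
  obtain ⟨N, hN⟩ := exists_big S φ ψ (fun s hs => k1 s (hS s hs))
  have hval : ∀ x, (N • φ + ψ) x = N * φ x + ψ x := fun x => rfl
  have hn : ∀ s ∈ S, 0 ≤ (N • φ + ψ) s := by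
    intro s hs
    rw [hval]
    by_cases h0 : φ s = 0
    · have : s ∈ G' := by rw [k2]; exact ⟨hS s hs, h0⟩
      have := m1 s this
      rw [h0]; linarith
    · exact (hN s hs h0).le
  refine isFace_of_aff (N • φ + ψ) (fun x hx => nonneg_hull hn hx) ?_
  ext x
  constructor
  · intro hx
    have hx' := hx
    rw [m2] at hx
    have hxG := hx.1
    rw [k2] at hxG
    refine ⟨hxG.1, ?_⟩
    rw [hval, hxG.2, hx.2]; ring
  · rintro ⟨h3, h4⟩
    have := mem_zero_hull hn h3 h4
    have hz : ∀ s ∈ S.filter (fun s => (N • φ + ψ) s = 0), φ s = 0 := by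
      intro s hs
      simp only [Finset.mem_filter] at hs
      by_contra hne
      exact (hN s hs.1 hne).ne' (by rw [← hval]; exact hs.2)
    have hφ : φ x = 0 := zero_hull (by simpa only [Finset.mem_coe] using hz) this
    rw [hval, hφ] at h4
    rw [m2, k2]
    exact ⟨⟨h3, hφ⟩, by linarith⟩

lemma pdim_hull (A : Set V) : pdim (convexHull ℝ A) = pdim A := by
  unfold pdim
  rw [affineSpan_convexHull]
  simp only [convexHull_eq_empty]

lemma pdim_lt {G F : Set V} (hG : IsPolytope G) (h : IsFace G F) (hne : F ≠ G) :
    pdim F < pdim G := by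
  obtain ⟨S, rfl⟩ := hG
  obtain ⟨φ, h1, h2⟩ := (isFace_iff ⟨S, rfl⟩).1 h
  have hS : ∀ s ∈ S, s ∈ convexHull ℝ (S : Set V) := fun s hs => subset_convexHull ℝ _ hs
  have hF := face_eq h
  obtain ⟨s, hs, hsF⟩ : ∃ s ∈ S, s ∉ F := by
    by_contra hcon
    push Not at hcon
    apply hne
    conv_lhs => rw [hF]
    rw [Finset.filter_true_of_mem hcon]
  have hz : s ∉ affineSpan ℝ ((S.filter (fun s => s ∈ F) : Finset V) : Set V) := by
    intro hmem
    have := affine_zero hmem φ (by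
      intro a ha
      simp only [Finset.coe_filter, Set.mem_ofPred_eq] at ha
      have := ha.2
      rw [h2] at this; exact this.2)
    apply hsF
    rw [h2]; exact ⟨hS s hs, this⟩
  have e1 := pdim_insert_notMem (Finset.finite_toSet _) hz
  have e2 : pdim (insert s ((S.filter (fun s => s ∈ F) : Finset V) : Set V)) ≤ pdim (S : Set V) := by
    apply pdim_mono _ (Finset.finite_toSet _)
    intro x hx
    rcases hx with rfl | hx
    · exact hs
    · exact (Finset.mem_filter.1 hx).1
  rw [hF, pdim_hull, pdim_hull]
  omega

lemma finite_faces {G : Set V} (hG : IsPolytope G) : {F | IsFace G F}.Finite := by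
  obtain ⟨S, rfl⟩ := hG
  apply Set.Finite.subset (S.powerset.image (fun A : Finset V => convexHull ℝ (A : Set V))).finite_toSet
  intro F hF
  rw [Finset.mem_coe, Finset.mem_image]
  exact ⟨_, Finset.mem_powerset.2 (Finset.filter_subset _ _), (face_eq hF).symm⟩

lemma euler {G F : Set V} (hG : IsPolytope G) (hF : IsFace G F) (hne : F ≠ G)
    (T : Finset (Set V)) (hT : ∀ z, z ∈ T ↔ IsFace G z ∧ F ⊆ z) :
    ∑ z ∈ T, (-1 : ℚ) ^ (pdim z + 1).toNat = 0 := by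
  obtain ⟨S, rfl⟩ := hG
  obtain ⟨φ, h1, h2⟩ := (isFace_iff ⟨S, rfl⟩).1 hF
  have hS : ∀ s ∈ S, s ∈ convexHull ℝ (S : Set V) := fun s hs => subset_convexHull ℝ _ hs
  have hFe := face_eq hF
  set K := S.filter (fun s => s ∈ F) with hK
  set S' := S.filter (fun s => s ∉ F) with hS'
  have hSne : S'.Nonempty := by
    by_contra hcon
    rw [Finset.not_nonempty_iff_eq_empty, Finset.filter_eq_empty_iff] at hcon
    push Not at hcon
    apply hne
    conv_lhs => rw [hFe]
    rw [hK, Finset.filter_true_of_mem (fun s hs => hcon hs)]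
  have hE := euler_comb K S' hSne φ (by
    intro x hx
    have := (Finset.mem_filter.1 hx).2
    rw [h2] at this; exact this.2) (by
    intro x hx
    have hx := Finset.mem_filter.1 hx
    refine lt_of_le_of_ne (h1 x (hS x hx.1)) (fun h0 => hx.2 ?_)
    rw [h2]; exact ⟨hS x hx.1, h0.symm⟩)
  rw [← hE]
  unfold EE
  rw [← Finset.sum_filter]
  symm
  have cellfacts : ∀ A ∈ S'.powerset.filter (fun A => Cell K A S' Set.univ),
      ∃ χ : V →ᵃ[ℝ] ℝ, (∀ s ∈ S, 0 ≤ χ s) ∧ S.filter (fun s => χ s = 0) = K ∪ A := by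
    intro A hA
    obtain ⟨hA, χ, -, c1, c2⟩ := Finset.mem_filter.1 hA
    rw [Finset.mem_powerset] at hA
    have hcase : ∀ s ∈ S, s ∉ K ∪ A → 0 < χ s := by
      intro s hs hsn
      simp only [Finset.mem_union, not_or] at hsn
      refine c2 s (Finset.mem_filter.2 ⟨hs, fun hsF => hsn.1 (Finset.mem_filter.2 ⟨hs, hsF⟩)⟩) hsn.2
    refine ⟨χ, ?_, ?_⟩
    · intro s hs
      by_cases hh : s ∈ K ∪ A
      · exact (c1 s hh).ge
      · exact (hcase s hs hh).le
    · ext s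
      rw [Finset.mem_filter]
      constructor
      · rintro ⟨a, b⟩
        by_contra hh
        exact (hcase s a hh).ne' b
      · intro hh
        refine ⟨?_, c1 s hh⟩
        rcases Finset.mem_union.1 hh with h | h
        · exact (Finset.mem_filter.1 h).1
        · exact (Finset.mem_filter.1 (hA h)).1
  refine Finset.sum_bij' (fun A _ => convexHull ℝ ((K ∪ A : Finset V) : Set V))
    (fun z _ => S'.filter (fun s => s ∈ z)) ?_ ?_ ?_ ?_ ?_
  · intro A hA
    obtain ⟨χ, c1, c2⟩ := cellfacts A hA
    rw [hT]
    constructor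
    · apply isFace_of_aff χ (fun x hx => nonneg_hull c1 hx)
      rw [← c2, hull_filter c1]
    · conv_lhs => rw [hFe]
      apply convexHull_mono
      simp
  · intro z hz
    rw [hT] at hz
    obtain ⟨χ, c1, c2⟩ := (isFace_iff ⟨S, rfl⟩).1 hz.1
    rw [Finset.mem_filter, Finset.mem_powerset]
    refine ⟨Finset.filter_subset _ _, χ, trivial, ?_, ?_⟩
    · intro x hx
      have : x ∈ z := by
        rcases Finset.mem_union.1 hx with h | h
        · exact hz.2 (Finset.mem_filter.1 h).2
        · exact (Finset.mem_filter.1 h).2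
      rw [c2] at this; exact this.2
    · intro x hx hxz
      have hxS := (Finset.mem_filter.1 hx).1
      refine lt_of_le_of_ne (c1 x (hS x hxS)) (fun h0 => hxz ?_)
      rw [Finset.mem_filter]
      refine ⟨hx, ?_⟩
      rw [c2]; exact ⟨hS x hxS, h0.symm⟩
  · intro A hA
    obtain ⟨χ, c1, c2⟩ := cellfacts A hA
    have hA' := Finset.mem_powerset.1 (Finset.mem_filter.1 hA).1
    ext s
    refine Finset.mem_filter.trans ?_
    rw [← c2, hull_filter c1]
    have hm : s ∈ S.filter (fun s => χ s = 0) ↔ s ∈ K ∪ A := by rw [c2]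
    rw [Finset.mem_filter, Finset.mem_union] at hm
    constructor
    · rintro ⟨a, b⟩
      have a' := Finset.mem_filter.1 a
      rcases hm.1 ⟨a'.1, b.2⟩ with h | h
      · exact absurd (Finset.mem_filter.1 h).2 a'.2
      · exact h
    · intro h
      refine ⟨hA' h, ?_⟩
      have := hm.2 (Or.inr h)
      exact ⟨hS s this.1, this.2⟩
  · intro z hz
    rw [hT] at hz
    conv_rhs => rw [face_eq hz.1]
    congr 2
    ext s
    simp only [Finset.mem_union, hK, hS', Finset.mem_filter]
    constructor
    · rintro (⟨a, b⟩ | ⟨⟨a, b⟩, c⟩)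
      · exact ⟨a, hz.2 b⟩
      · exact ⟨a, c⟩
    · rintro ⟨a, b⟩
      by_cases h : s ∈ F
      · exact Or.inl ⟨a, h⟩
      · exact Or.inr ⟨⟨a, h⟩, b⟩
  · intro A hA
    unfold rk
    rw [pdim_hull]

lemma pdim_eq_neg_one {G : Set V} (h : (pdim G + 1).toNat = 0) : G = ∅ := by
  by_contra hne
  unfold pdim at h
  rw [if_neg hne] at h
  omega

lemma relHAux_self (n : ℕ) (F : Set V) : relHAux n F F = 1 := by
  cases n <;> simp [relHAux]

lemma relHAux_fuel (n m : ℕ) (F G : Set V) (hG : IsPolytope G) (hFG : F ⊆ G)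
    (hn : (pdim G + 1).toNat ≤ n) (hm : (pdim G + 1).toNat ≤ m) :
    relHAux n F G = relHAux m F G := by
  induction n generalizing m G with
  | zero =>
    have hG0 := pdim_eq_neg_one (Nat.le_zero.1 hn)
    subst hG0
    have : F = ∅ := Set.subset_empty_iff.1 hFG
    subst this
    rw [relHAux_self, relHAux_self]
  | succ n ih =>
    cases m with
    | zero =>
      have hG0 := pdim_eq_neg_one (Nat.le_zero.1 hm)
      subst hG0
      have : F = ∅ := Set.subset_empty_iff.1 hFG
      subst this
      rw [relHAux_self, relHAux_self]
    | succ m =>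
      simp only [relHAux]
      split_ifs
      · rfl
      · apply finsum_mem_congr rfl
        rintro G' ⟨h1, h2, h3⟩
        have := pdim_lt hG h1 h3
        have := neg_one_le_pdim G'
        rw [ih m G' (face_polytope hG h1) h2 (by omega) (by omega)]

lemma relH_rec (F G : Set V) (hG : IsPolytope G) (hFG : F ⊆ G) (hne : G ≠ F) :
    relH F G = ∑ᶠ G' ∈ {G' : Set V | IsFace G G' ∧ F ⊆ G' ∧ G' ≠ G},
        relG F G' * (Polynomial.X - 1) ^ (pdim G - pdim G' - 1).toNat := by
  unfold relH relG
  have : (pdim G + 1).toNat ≠ 0 := by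
    intro h
    have := pdim_eq_neg_one h
    subst this
    exact hne (Set.subset_empty_iff.1 hFG).symm
  obtain ⟨n, hn⟩ := Nat.exists_eq_succ_of_ne_zero this
  rw [hn, Nat.succ_eq_add_one, relHAux, if_neg hne]
  apply finsum_mem_congr rfl
  rintro G' ⟨h1, h2, h3⟩
  have := pdim_lt hG h1 h3
  have := neg_one_le_pdim G'
  unfold relH
  rw [relHAux_fuel n _ F G' (face_polytope hG h1) h2 (by omega) le_rfl]

lemma coeff_truncG (d : ℤ) (h : ℚ[X]) (k : ℕ) :
    (truncG d h).coeff k = if k ≤ d.toNat / 2 then ((1 - X) * h).coeff k else 0 := by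
  unfold truncG
  rw [finsetSum_coeff]
  simp only [coeff_C_mul, coeff_X_pow, mul_ite, mul_one, mul_zero]
  rw [Finset.sum_ite_eq]
  simp only [Finset.mem_range, Nat.lt_succ_iff]
  congr 1
  rw [sub_mul, coeff_sub, one_mul]
  cases k with
  | zero => simp
  | succ k => rw [coeff_X_mul]; simp

lemma relG_self (F : Set V) : relG F F = 1 := by
  ext k
  unfold relG relH
  rw [relHAux_self, coeff_truncG, mul_one]
  have : (pdim F - pdim F - 1).toNat / 2 = 0 := by simp
  rw [this]
  cases k with
  | zero => simp
  | succ k => simp [coeff_one]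

lemma finsum_sub {P : Set V} [Fintype {F // IsFace P F}] {M : Type*} [AddCommMonoid M]
    (T : Set (Set V)) (p : {F // IsFace P F} → Prop)
    (hT : ∀ F, F ∈ T ↔ ∃ h : IsFace P F, p ⟨F, h⟩) (f : Set V → M) :
    ∑ᶠ F ∈ T, f F = ∑ z ∈ Finset.univ.filter p, f z.1 := by
  have : T = (((Finset.univ.filter p).image Subtype.val : Finset (Set V)) : Set (Set V)) := by
    ext F
    rw [hT]
    simp
  rw [this, finsum_mem_coe_finset, Finset.sum_image (fun _ _ _ _ h => Subtype.val_injective h)]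

end Faces

end KalaiAux
/-- Kalai's identity: for every `d`-polytope `P` and `0 ≤ k ≤ d/2 - 1`,
`(k+1)·g_{k+1}(P) + (d-k+1)·g_k(P)
   = ∑_{i=0}^{k} (i+1) ∑_{dim F = 2i} g_i(F)·g_{k-i}(P/F)`. -/
theorem kalai_identity {V : Type*} [AddCommGroup V] [Module ℝ V]
    (P : Set V) (hP : IsPolytope P) (d : ℕ) (hdim : pdim P = (d : ℤ))
    (k : ℕ) (hk : 2 * (k + 1) ≤ d) :
    ((k : ℚ) + 1) * (toricG P).coeff (k + 1) +
        ((d : ℚ) - (k : ℚ) + 1) * (toricG P).coeff k =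
      ∑ i ∈ Finset.range (k + 1), ((i : ℚ) + 1) *
        ∑ᶠ F ∈ {F : Set V | IsFace P F ∧ pdim F = (2 * i : ℤ)},
          (toricG F).coeff i * (relG F P).coeff (k - i) := by
  have hfin : Finite {F // IsFace P F} := (KalaiAux.finite_faces hP).to_subtype
  have : Fintype {F // IsFace P F} := Fintype.ofFinite _
  have hpoly : ∀ z : {F // IsFace P F}, IsPolytope z.1 := fun z => KalaiAux.face_polytope hP z.2
  have hface : ∀ x y : {F // IsFace P F}, x ≤ y → IsFace y.1 x.1 := fun x y h =>
    KalaiAux.face_restrict hP x.2 h (KalaiAux.face_subset y.2)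
  have hlt : ∀ x y : {F // IsFace P F}, x < y → pdim x.1 < pdim y.1 := fun x y h =>
    KalaiAux.pdim_lt (hpoly y) (hface x y h.le) (fun e => h.ne (Subtype.ext e))
  let ρ : {F // IsFace P F} → ℕ := fun x => (pdim x.1 + 1).toNat
  have hρv : ∀ x, (ρ x : ℤ) = pdim x.1 + 1 := fun x => by
    have := KalaiAux.neg_one_le_pdim x.1
    simp only [ρ]; omega
  have hρ : StrictMono ρ := by
    intro x y h
    have := hlt x y h
    have := hρv x; have := hρv y
    omega
  have hE : ∀ x y : {F // IsFace P F}, x < y →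
      ∑ z ∈ Finset.univ.filter (fun z => x ≤ z ∧ z ≤ y), (-1 : ℚ) ^ ρ z = 0 := by
    intro x y hxy
    have := KalaiAux.euler (hpoly y) (hface x y hxy.le) (fun e => hxy.ne (Subtype.ext e))
      ((Finset.univ.filter (fun z : {F // IsFace P F} => x ≤ z ∧ z ≤ y)).image Subtype.val) (by
        intro z
        rw [Finset.mem_image]
        constructor
        · rintro ⟨w, hw, rfl⟩
          have hw := (Finset.mem_filter.1 hw).2
          exact ⟨hface w y hw.2, hw.1⟩
        · rintro ⟨h1, h2⟩
          exact ⟨⟨z, KalaiAux.face_trans hP y.2 h1⟩,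
            Finset.mem_filter.2 ⟨Finset.mem_univ _, h2, KalaiAux.face_subset h1⟩, rfl⟩)
    rw [Finset.sum_image (fun _ _ _ _ h => Subtype.val_injective h)] at this
    exact this
  let g : Matrix {F // IsFace P F} {F // IsFace P F} ℚ[X] := fun x y =>
    if x ≤ y then relG x.1 y.1 else 0
  have hgv : ∀ x y, x ≤ y → g x y = relG x.1 y.1 := fun x y h => if_pos h
  have hg : KalaiAux.IsG ρ g := by
    refine ⟨fun x y h => if_neg h, fun x => ?_, ?_⟩
    · rw [hgv x x le_rfl, KalaiAux.relG_self]
    · intro x y hxy k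
      rw [hgv x y hxy.le]
      unfold relG
      rw [KalaiAux.coeff_truncG]
      have c : k ≤ (pdim y.1 - pdim x.1 - 1).toNat / 2 ↔ 2 * k < ρ y - ρ x := by
        have := hlt x y hxy
        have := hρv x; have := hρv y
        omega
      simp only [c]
      congr 1
      rw [← coeff_neg]
      congr 1
      rw [KalaiAux.relH_rec x.1 y.1 (hpoly y) hxy.le (fun e => hxy.ne (Subtype.ext e.symm)),
        KalaiAux.finsum_sub (P := P) _ (fun z => x ≤ z ∧ z < y)]
      · rw [Finset.mul_sum, ← Finset.sum_neg_distrib]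
        apply Finset.sum_congr (by ext z; simp only [Finset.mem_filter])
        intro z hz
        have hz := (Finset.mem_filter.1 hz).2
        rw [hgv x z hz.1]
        have : ρ y - ρ z = (pdim y.1 - pdim z.1 - 1).toNat + 1 := by
          have := hlt z y hz.2
          have := hρv z; have := hρv y
          omega
        rw [this, pow_succ]
        ring
      · intro F
        constructor
        · rintro ⟨h1, h2, h3⟩
          exact ⟨KalaiAux.face_trans hP y.2 h1, h2,
            lt_of_le_of_ne (KalaiAux.face_subset h1) (fun e => h3 (congrArg Subtype.val e))⟩
        · rintro ⟨h1, h2, h3⟩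
          exact ⟨hface _ y h3.le, h2, fun e => h3.ne (Subtype.ext e)⟩
  let x0 : {F // IsFace P F} := ⟨∅, Or.inr (Or.inl rfl)⟩
  let y0 : {F // IsFace P F} := ⟨P, Or.inl rfl⟩
  have hx0 : ∀ z, x0 ≤ z := fun z => Set.empty_subset _
  have hy0 : ∀ z, z ≤ y0 := fun z => KalaiAux.face_subset z.2
  have rx : ρ x0 = 0 := by simp [ρ, x0, pdim]
  have ry : ρ y0 = d + 1 := by
    have := hρv y0
    have e : y0.1 = P := rfl
    rw [e, hdim] at this
    omega
  have main := KalaiAux.main_abs hρ hE hg x0 y0 k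
  rw [hgv _ _ (hx0 y0), rx, ry] at main
  have e1 : ((d : ℚ) - (k : ℚ) + 1) = (((d + 1 - 0 : ℕ) : ℚ) - k) := by push_cast; ring
  rw [e1]
  unfold toricG
  refine main.trans ?_
  apply Finset.sum_congr rfl
  intro i _
  congr 1
  rw [KalaiAux.finsum_sub (P := P) _ (fun z => x0 ≤ z ∧ ρ z - 0 = 2 * i + 1)]
  · apply Finset.sum_congr (by ext z; simp only [Finset.mem_filter])
    intro z _
    rw [hgv _ _ (hx0 z), hgv _ _ (hy0 z)]
  · intro F
    constructor
    · rintro ⟨h1, h2⟩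
      refine ⟨h1, hx0 _, ?_⟩
      have := hρv ⟨F, h1⟩
      simp only at this
      omega
    · rintro ⟨h1, -, h2⟩
      refine ⟨h1, ?_⟩
      have := hρv ⟨F, h1⟩
      simp only at this
      omega
end
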